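/- Let J : ℝ → [0,∞) be a strictly convex function with J(0) = 0, and let g ∈ L¹(ℝⁿ) be nonnegative with g(x) = g₀(|x|) for a strictly decreasing function g₀ on (0,∞) (in particular g = g^{*n}). Let u, v : ℝⁿ → [0,∞) be nonnegative measurable functions such that |{u > τ}| < ∞ and |{v > τ}| < ∞ for all τ > 0 and such that ∫_{ℝⁿ}∫_{ℝⁿ} J(u(x) − v(y)) g(x−y) dx dy is finite. Then equality ∫∫ J(u^{*n}(x) − v^{*n}(y)) g(x−y) dx dy = ∫∫ J(u(x) − v(y)) g(x−y) dx dy holds if and only if one of the following holds: (i) u = 0 almost everywhere or v = 0 almost everywhere; (ii) there exists a ∈ ℝⁿ such that u(x) = u^{*n}(x−a) for a.e. x ∈ ℝⁿ and v(y) = v^{*n}(y−a) for a.e. y ∈ ℝⁿ. -/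

import Mathlib

open MeasureTheory Real

/-- For a measurable set `A ⊂ ℝⁿ` of finite Lebesgue measure, the radius of the open ball
centered at the origin with the same measure as `A`. -/
noncomputable def schwarzRadius (n : ℕ) (A : Set (EuclideanSpace ℝ (Fin n))) : ℝ :=
  ((volume A).toReal / (volume (Metric.ball (0 : EuclideanSpace ℝ (Fin n)) 1)).toReal) ^
    ((n : ℝ)⁻¹)

/-- `A^{*n}`: the open ball in `ℝⁿ` centered at the origin with the same measure as `A`. -/
noncomputable def schwarzSet (n : ℕ) (A : Set (EuclideanSpace ℝ (Fin n))) :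
    Set (EuclideanSpace ℝ (Fin n)) :=
  Metric.ball 0 (schwarzRadius n A)

/-- The Schwarz rearrangement `u^{*n}(x) := ∫₀^∞ χ_{{|u|>t}^{*n}}(x) dt`. -/
noncomputable def schwarzRearr (n : ℕ) (u : EuclideanSpace ℝ (Fin n) → ℝ) :
    EuclideanSpace ℝ (Fin n) → ℝ := fun x =>
  ∫ t in Set.Ioi (0 : ℝ), (schwarzSet n {y | t < |u y|}).indicator (fun _ => (1 : ℝ)) x

namespace RR

open Filter Topology Set
open scoped ENNReal

/-- Euclidean space -/
abbrev V (n : ℕ) := EuclideanSpace ℝ (Fin n)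

variable {n : ℕ}

/-- signed distance to the hyperplane -/
noncomputable def ell (e : V n) (s : ℝ) (x : V n) : ℝ := inner ℝ e x - s

/-- reflection in the hyperplane -/
noncomputable def refl (e : V n) (s : ℝ) (x : V n) : V n := x - (2 * ell e s x) • e

/-- polarization -/
noncomputable def pol (e : V n) (s : ℝ) (u : V n → ℝ) (x : V n) : ℝ :=
  if 0 ≤ ell e s x then max (u x) (u (refl e s x)) else min (u x) (u (refl e s x))

lemma inner_self_one {e : V n} (he : ‖e‖ = 1) : inner ℝ e e = 1 := by
  rw [real_inner_self_eq_norm_sq, he]; norm_num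

lemma ell_refl {e : V n} (he : ‖e‖ = 1) (s : ℝ) (x : V n) :
    ell e s (refl e s x) = - ell e s x := by
  unfold refl
  simp only [ell, inner_sub_right, inner_smul_right, inner_self_one he]
  ring

lemma refl_refl {e : V n} (he : ‖e‖ = 1) (s : ℝ) (x : V n) :
    refl e s (refl e s x) = x := by
  conv_lhs => unfold refl
  rw [show x - (2 * ell e s x) • e = refl e s x from rfl, ell_refl he]
  unfold refl
  module

lemma norm_sub_refl_sq {e : V n} (he : ‖e‖ = 1) (s : ℝ) (x y : V n) :
    ‖x - refl e s y‖ ^ 2 = ‖x - y‖ ^ 2 + 4 * ell e s x * ell e s y := by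
  have : x - refl e s y = (x - y) + (2 * ell e s y) • e := by unfold refl; module
  rw [this, norm_add_sq_real, norm_smul, he, inner_smul_right, real_inner_comm]
  simp only [inner_sub_right, mul_one, norm_eq_abs, sq_abs]
  simp only [ell]; ring

lemma norm_refl_sub_refl {e : V n} (he : ‖e‖ = 1) (s : ℝ) (x y : V n) :
    ‖refl e s x - refl e s y‖ = ‖x - y‖ := by
  have h := norm_sub_refl_sq he s (refl e s x) y
  have h2 := norm_sub_refl_sq he s y x
  rw [ell_refl he, norm_sub_rev (refl e s x) y, h2, norm_sub_rev y x] at h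
  have h3 : ‖refl e s x - refl e s y‖ ^ 2 = ‖x - y‖ ^ 2 := by rw [h]; ring
  exact (sq_eq_sq₀ (norm_nonneg _) (norm_nonneg _)).1 h3

lemma norm_sub_refl_comm {e : V n} (he : ‖e‖ = 1) (s : ℝ) (x y : V n) :
    ‖refl e s x - y‖ = ‖x - refl e s y‖ := by
  rw [← norm_refl_sub_refl he s x (refl e s y), refl_refl he]

lemma norm_sub_lt_iff {e : V n} (he : ‖e‖ = 1) (s : ℝ) (x y : V n) :
    ‖x - y‖ < ‖x - refl e s y‖ ↔ 0 < ell e s x * ell e s y := by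
  rw [← sq_lt_sq₀ (norm_nonneg _) (norm_nonneg _), norm_sub_refl_sq he]
  constructor <;> intro h <;> nlinarith

lemma norm_sub_gt_iff {e : V n} (he : ‖e‖ = 1) (s : ℝ) (x y : V n) :
    ‖x - refl e s y‖ < ‖x - y‖ ↔ ell e s x * ell e s y < 0 := by
  rw [← sq_lt_sq₀ (norm_nonneg _) (norm_nonneg _), norm_sub_refl_sq he]
  constructor <;> intro h <;> nlinarith

lemma refl_eq_self {e : V n} {s : ℝ} {x : V n} (h : ell e s x = 0) : refl e s x = x := by
  simp [refl, h]

lemma continuous_ell (e : V n) : Continuous fun p : ℝ × V n => ell e p.1 p.2 := by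
  unfold ell; fun_prop

lemma continuous_ell' (e : V n) (s : ℝ) : Continuous (ell e s) := by
  unfold ell; fun_prop

lemma continuous_refl (e : V n) : Continuous fun p : ℝ × V n => refl e p.1 p.2 := by
  unfold refl ell; fun_prop

lemma continuous_refl' (e : V n) (s : ℝ) : Continuous (refl e s) := by
  unfold refl ell; fun_prop

lemma mp_refl {e : V n} (he : ‖e‖ = 1) (s : ℝ) :
    MeasurePreserving (refl e s) (volume : Measure (V n)) volume := by
  have h1 := (Submodule.reflection (ℝ ∙ e)ᗮ).measurePreserving
  have h2 := measurePreserving_add_right (volume : Measure (V n)) ((2 * s) • e)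
  have h3 := h2.comp h1
  have h4 : refl e s = (fun x => x + (2 * s) • e) ∘ (Submodule.reflection (ℝ ∙ e)ᗮ) := by
    funext x
    rw [Function.comp_apply, Submodule.reflection_orthogonal_apply,
      Submodule.reflection_singleton_apply, he]
    unfold refl ell
    simp only [RCLike.ofReal_real_eq_id, id, one_pow, div_one]
    module
  rw [h4]; exact h3

lemma lint_refl {e : V n} (he : ‖e‖ = 1) (s : ℝ) (f : V n → ℝ≥0∞) (hf : Measurable f) :
    ∫⁻ x, f (refl e s x) = ∫⁻ x, f x := (mp_refl he s).lintegral_comp hf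

lemma measurable_pol {e : V n} {s : ℝ} {u : V n → ℝ} (hu : Measurable u) :
    Measurable (pol e s u) := by
  have h := hu.comp (continuous_refl' e s).measurable
  refine Measurable.ite ?_ (hu.max h) (hu.min h)
  exact measurableSet_le measurable_const (continuous_ell' e s).measurable

/-- pol at a pair of points: either kept, or swapped. -/
lemma pol_pair {e : V n} (he : ‖e‖ = 1) (s : ℝ) (u : V n → ℝ) (x : V n) :
    (pol e s u x = u x ∧ pol e s u (refl e s x) = u (refl e s x) ∧
      0 ≤ ell e s x * (u x - u (refl e s x))) ∨
    (pol e s u x = u (refl e s x) ∧ pol e s u (refl e s x) = u x ∧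
      ell e s x * (u x - u (refl e s x)) ≤ 0) := by
  unfold pol
  rw [refl_refl he, ell_refl he]
  rcases lt_trichotomy (ell e s x) 0 with h | h | h
  · rw [if_neg (not_le.2 h), if_pos (by linarith)]
    rcases le_total (u x) (u (refl e s x)) with h2 | h2
    · left; refine ⟨min_eq_left h2, max_eq_left h2, by nlinarith⟩
    · right; refine ⟨min_eq_right h2, max_eq_right h2, by nlinarith⟩
  · left
    rw [h, refl_eq_self h]; simp
  · rw [if_pos h.le, if_neg (by linarith)]
    rcases le_total (u x) (u (refl e s x)) with h2 | h2
    · right; refine ⟨max_eq_right h2, min_eq_right h2, by nlinarith⟩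
    · left; refine ⟨max_eq_left h2, min_eq_left h2, by nlinarith⟩

lemma pol_nonneg {e : V n} {s : ℝ} {u : V n → ℝ} (hu : ∀ x, 0 ≤ u x) (x : V n) :
    0 ≤ pol e s u x := by
  unfold pol; split_ifs
  · exact le_max_of_le_left (hu _)
  · exact le_min (hu _) (hu _)

/-- level sets keep their measure -/
lemma vol_pol {e : V n} (he : ‖e‖ = 1) (s : ℝ) {u : V n → ℝ} (hu : Measurable u) (t : ℝ) :
    volume {x | t < pol e s u x} = volume {x | t < u x} := by
  have key : ∀ w : V n → ℝ, Measurable w →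
      2 * volume {x | t < w x} = ∫⁻ x, (({x | t < w x}.indicator 1 x : ℝ≥0∞) +
        {x | t < w x}.indicator 1 (refl e s x)) := by
    intro w hw
    have hm : MeasurableSet {x | t < w x} := measurableSet_lt measurable_const hw
    have hi : Measurable ({x | t < w x}.indicator (1 : V n → ℝ≥0∞)) :=
      measurable_one.indicator hm
    rw [lintegral_add_left hi, lint_refl he s _ hi, lintegral_indicator_one hm, two_mul]
  have h2 : 2 * volume {x | t < pol e s u x} = 2 * volume {x | t < u x} := by
    rw [key _ (measurable_pol hu), key _ hu]
    congr 1
    ext1 x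
    rcases pol_pair he s u x with ⟨h, h', -⟩ | ⟨h, h', -⟩
    · simp only [indicator, mem_ofPred_eq, h, h']
    · simp only [indicator, mem_ofPred_eq, h, h', Pi.one_apply]; rw [add_comm]
  exact (ENNReal.mul_right_inj (by norm_num) (by norm_num)).1 h2

end RR

open MeasureTheory Real
namespace RR
open Filter Topology Set
open scoped ENNReal
variable {n : ℕ}

/-- hypotheses on the convex function -/
structure JJ (J : ℝ → ℝ) : Prop where
  nonneg : ∀ t, 0 ≤ J t
  conv : StrictConvexOn ℝ Set.univ J
  zero : J 0 = 0

/-- hypotheses on the kernel -/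
structure Ker (g : V n → ℝ) : Prop where
  nonneg : ∀ x, 0 ≤ g x
  meas : Measurable g
  rad : ∀ x y, ‖x‖ = ‖y‖ → g x = g y
  anti : ∀ x y, x ≠ 0 → ‖x‖ < ‖y‖ → g y < g x
  int : Integrable g

/-- the energy -/
noncomputable def En (J : ℝ → ℝ) (g : V n → ℝ) (u v : V n → ℝ) : ℝ≥0∞ :=
  ∫⁻ x : V n, ∫⁻ y : V n, ENNReal.ofReal (J (u x - v y) * g (x - y))

lemma JJ.cont {J : ℝ → ℝ} (hJ : JJ J) : Continuous J :=
  hJ.conv.convexOn.locallyLipschitz.continuous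

lemma cvx_strict {J : ℝ → ℝ} (hJ : JJ J) {c d m k : ℝ} (h1 : c < m) (h2 : c < k)
    (h3 : m + k = c + d) : J m + J k < J c + J d := by
  have hcd : c < d := by linarith
  have hp : 0 < d - c := by linarith
  have e1 := hJ.conv.2 (mem_univ c) (mem_univ d) hcd.ne
    (div_pos (show 0 < d - m by linarith) hp)
    (div_pos (show 0 < m - c by linarith) hp) (by field_simp; ring)
  have e2 := hJ.conv.2 (mem_univ c) (mem_univ d) hcd.ne
    (div_pos (show 0 < m - c by linarith) hp)
    (div_pos (show 0 < d - m by linarith) hp) (by field_simp; ring)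
  simp only [smul_eq_mul] at e1 e2
  have a1 : (d - m) / (d - c) * c + (m - c) / (d - c) * d = m := by field_simp; ring
  have a2 : (m - c) / (d - c) * c + (d - m) / (d - c) * d = k := by
    field_simp; rw [show k = c + d - m by linarith]; ring
  rw [a1] at e1; rw [a2] at e2
  have a3 : (d - m) / (d - c) + (m - c) / (d - c) = 1 := by field_simp; ring
  have : (d - m) / (d - c) = 1 - (m - c) / (d - c) := by linarith
  rw [this] at e1 e2
  nlinarith

/-- mixed difference -/
noncomputable def Bd (J : ℝ → ℝ) (a a' b b' : ℝ) : ℝ :=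
  J (a - b) + J (a' - b') - (J (a - b') + J (a' - b))

lemma Bd_pos {J : ℝ → ℝ} (hJ : JJ J) {a a' b b' : ℝ} (h : (a - a') * (b - b') < 0) :
    0 < Bd J a a' b b' := by
  unfold Bd
  rcases mul_neg_iff.1 h with ⟨h1, h2⟩ | ⟨h1, h2⟩
  · have := cvx_strict hJ (c := a' - b') (d := a - b) (m := a - b') (k := a' - b)
      (by linarith) (by linarith) (by ring)
    linarith
  · have := cvx_strict hJ (c := a - b) (d := a' - b') (m := a - b') (k := a' - b)
      (by linarith) (by linarith) (by ring)
    linarith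

lemma Bd_neg {J : ℝ → ℝ} (hJ : JJ J) {a a' b b' : ℝ} (h : 0 < (a - a') * (b - b')) :
    Bd J a a' b b' < 0 := by
  have := Bd_pos hJ (a := a) (a' := a') (b := b') (b' := b) (by linarith)
  unfold Bd at *; linarith

lemma Bd_zero {J : ℝ → ℝ} {a a' b b' : ℝ} (h : (a - a') * (b - b') = 0) :
    Bd J a a' b b' = 0 := by
  unfold Bd
  rcases mul_eq_zero.1 h with h | h
  · rw [show a' = a by linarith]; ring
  · rw [show b' = b by linarith]; ring

/-- four term sum -/
noncomputable def Qs (J : ℝ → ℝ) (g : V n → ℝ) (e : V n) (s : ℝ) (u v : V n → ℝ)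
    (p : V n × V n) : ℝ :=
  g (p.1 - p.2) * (J (u p.1 - v p.2) + J (u (refl e s p.1) - v (refl e s p.2))) +
  g (p.1 - refl e s p.2) * (J (u p.1 - v (refl e s p.2)) + J (u (refl e s p.1) - v p.2))

lemma Qs_nonneg {J : ℝ → ℝ} (hJ : JJ J) {g : V n → ℝ} (hg : Ker g) {e : V n} {s : ℝ}
    {u v : V n → ℝ} (p : V n × V n) : 0 ≤ Qs J g e s u v p := by
  unfold Qs
  have := hJ.nonneg
  have := hg.nonneg
  exact add_nonneg (mul_nonneg (this _) (add_nonneg (hJ.nonneg _) (hJ.nonneg _)))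
    (mul_nonneg (this _) (add_nonneg (hJ.nonneg _) (hJ.nonneg _)))

lemma gdiff {g : V n → ℝ} (hg : Ker g) {e : V n} (he : ‖e‖ = 1) {s : ℝ} {x y : V n}
    (h1 : x ≠ y) (h2 : x ≠ refl e s y) :
    (0 < ell e s x * ell e s y → g (x - refl e s y) < g (x - y)) ∧
    (ell e s x * ell e s y < 0 → g (x - y) < g (x - refl e s y)) ∧
    (ell e s x * ell e s y = 0 → g (x - y) = g (x - refl e s y)) := by
  refine ⟨fun h => hg.anti _ _ (sub_ne_zero.2 h1) ((norm_sub_lt_iff he s x y).2 h),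
    fun h => hg.anti _ _ (sub_ne_zero.2 h2) ((norm_sub_gt_iff he s x y).2 h), fun h => ?_⟩
  apply hg.rad
  have := norm_sub_refl_sq he s x y
  rw [mul_assoc, h, mul_zero, add_zero] at this
  exact ((sq_eq_sq₀ (norm_nonneg _) (norm_nonneg _)).1 this).symm

lemma Qs_pol {J : ℝ → ℝ} (hJ : JJ J) {g : V n → ℝ} (hg : Ker g) {e : V n} (he : ‖e‖ = 1) {s : ℝ}
    {u v : V n → ℝ} {p : V n × V n} (h1 : p.1 ≠ p.2) (h2 : p.1 ≠ refl e s p.2) :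
    Qs J g e s (pol e s u) (pol e s v) p ≤ Qs J g e s u v p ∧
    ((ell e s p.1 * ell e s p.2) * ((u p.1 - u (refl e s p.1)) * (v p.2 - v (refl e s p.2))) < 0 →
      Qs J g e s (pol e s u) (pol e s v) p < Qs J g e s u v p) := by
  obtain ⟨x, y⟩ := p
  simp only at *
  obtain ⟨g1, g2, g3⟩ := gdiff hg he h1 h2
  unfold Qs
  simp only
  -- the mixed case
  have mixed : (ell e s x * ell e s y) * ((u x - u (refl e s x)) * (v y - v (refl e s y))) ≤ 0 →
      0 ≤ (g (x - y) - g (x - refl e s y)) * Bd J (u x) (u (refl e s x)) (v y) (v (refl e s y)) ∧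
      ((ell e s x * ell e s y) * ((u x - u (refl e s x)) * (v y - v (refl e s y))) < 0 →
      0 < (g (x - y) - g (x - refl e s y)) *
        Bd J (u x) (u (refl e s x)) (v y) (v (refl e s y))) := by
    intro h
    have strict : ((ell e s x * ell e s y) *
        ((u x - u (refl e s x)) * (v y - v (refl e s y))) < 0 →
      0 < (g (x - y) - g (x - refl e s y)) *
        Bd J (u x) (u (refl e s x)) (v y) (v (refl e s y))) := by
      intro h
      rcases mul_neg_iff.1 h with ⟨a, b⟩ | ⟨a, b⟩
      · exact mul_pos (by linarith [g1 a]) (Bd_pos hJ b)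
      · exact mul_pos_of_neg_of_neg (by linarith [g2 a]) (Bd_neg hJ b)
    refine ⟨?_, strict⟩
    rcases h.lt_or_eq with h | h
    · exact (strict h).le
    · rcases mul_eq_zero.1 h with h | h
      · rw [g3 h]; simp
      · rw [Bd_zero h]; simp
  rcases pol_pair he s u x with ⟨a, a', ha⟩ | ⟨a, a', ha⟩ <;>
  rcases pol_pair he s v y with ⟨b, b', hb⟩ | ⟨b, b', hb⟩ <;> rw [a, a', b, b']
  · exact ⟨le_rfl, fun h => absurd h (by nlinarith [mul_nonneg ha hb])⟩
  · have := mixed (by nlinarith [mul_nonneg ha (neg_nonneg.2 hb)])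
    unfold Bd at this
    exact ⟨by linarith [this.1], fun h => by linarith [this.2 h]⟩
  · have := mixed (by nlinarith [mul_nonneg (neg_nonneg.2 ha) hb])
    unfold Bd at this
    exact ⟨by linarith [this.1], fun h => by linarith [this.2 h]⟩
  · exact ⟨by linarith, fun h =>
      absurd h (by nlinarith [mul_nonneg (neg_nonneg.2 ha) (neg_nonneg.2 hb)])⟩

/-- integrand on the product -/
noncomputable def ep (J : ℝ → ℝ) (g : V n → ℝ) (u v : V n → ℝ) (p : V n × V n) : ℝ≥0∞ :=
  ENNReal.ofReal (J (u p.1 - v p.2) * g (p.1 - p.2))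

lemma ep_meas {J : ℝ → ℝ} (hJ : JJ J) {g : V n → ℝ} (hg : Ker g)
    {u v : V n → ℝ} (hu : Measurable u) (hv : Measurable v) : Measurable (ep J g u v) := by
  unfold ep
  have := hJ.cont.measurable
  have := hg.meas
  fun_prop

lemma En_eq_prod {J : ℝ → ℝ} (hJ : JJ J) {g : V n → ℝ} (hg : Ker g)
    {u v : V n → ℝ} (hu : Measurable u) (hv : Measurable v) :
    En J g u v = ∫⁻ p, ep J g u v p ∂(volume.prod volume) := by
  rw [lintegral_prod _ (ep_meas hJ hg hu hv).aemeasurable]; rfl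

lemma En_four {J : ℝ → ℝ} (hJ : JJ J) {g : V n → ℝ} (hg : Ker g) {e : V n} (he : ‖e‖ = 1) (s : ℝ)
    {u v : V n → ℝ} (hu : Measurable u) (hv : Measurable v) :
    4 * En J g u v = ∫⁻ p, ENNReal.ofReal (Qs J g e s u v p) ∂(volume.prod volume) := by
  have hm := ep_meas hJ hg hu hv
  have i1 : MeasurePreserving (fun p : V n × V n => (refl e s p.1, p.2))
    (volume.prod volume) (volume.prod volume) := (mp_refl he s).prod (MeasurePreserving.id _)
  have i2 : MeasurePreserving (fun p : V n × V n => (p.1, refl e s p.2))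
    (volume.prod volume) (volume.prod volume) := (MeasurePreserving.id _).prod (mp_refl he s)
  have i3 : MeasurePreserving (fun p : V n × V n => (refl e s p.1, refl e s p.2))
    (volume.prod volume) (volume.prod volume) := (mp_refl he s).prod (mp_refl he s)
  have l1 := i1.lintegral_comp hm
  have l2 := i2.lintegral_comp hm
  have l3 := i3.lintegral_comp hm
  have : ∀ p, ENNReal.ofReal (Qs J g e s u v p) = ep J g u v p +
      ep J g u v (refl e s p.1, refl e s p.2) + ep J g u v (p.1, refl e s p.2) +
      ep J g u v (refl e s p.1, p.2) := by
    intro p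
    have q : ∀ a b, 0 ≤ J a * g b := fun a b => mul_nonneg (hJ.nonneg a) (hg.nonneg b)
    unfold ep
    rw [← ENNReal.ofReal_add (q _ _) (q _ _), ← ENNReal.ofReal_add (add_nonneg (q _ _) (q _ _))
      (q _ _), ← ENNReal.ofReal_add (add_nonneg (add_nonneg (q _ _) (q _ _)) (q _ _)) (q _ _)]
    congr 1
    unfold Qs
    simp only
    rw [hg.rad (refl e s p.1 - refl e s p.2) (p.1 - p.2) (norm_refl_sub_refl he s _ _),
      hg.rad (refl e s p.1 - p.2) (p.1 - refl e s p.2) (norm_sub_refl_comm he s _ _)]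
    ring
  simp_rw [this]
  have k1 : Measurable fun p : V n × V n => ep J g u v (refl e s p.1, p.2) := hm.comp i1.measurable
  have k2 : Measurable fun p : V n × V n => ep J g u v (p.1, refl e s p.2) := hm.comp i2.measurable
  have k3 : Measurable fun p : V n × V n => ep J g u v (refl e s p.1, refl e s p.2) :=
    hm.comp i3.measurable
  rw [lintegral_add_right _ k1, lintegral_add_right _ k2, lintegral_add_right _ k3, l1, l2, l3, En_eq_prod hJ hg hu hv]
  ring

lemma ae_off_diag [NeZero n] {e : V n} (s : ℝ) :
    ∀ᵐ p : V n × V n ∂(volume.prod volume), p.1 ≠ p.2 ∧ p.1 ≠ refl e s p.2 := by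
  have m1 : MeasurableSet {p : V n × V n | p.1 ≠ p.2 ∧ p.1 ≠ refl e s p.2} := by
    have : Measurable (refl e s) := (continuous_refl' e s).measurable
    apply MeasurableSet.inter
    · exact (measurableSet_eq_fun measurable_fst measurable_snd).compl
    · exact (measurableSet_eq_fun measurable_fst (this.comp measurable_snd)).compl
  refine (Measure.ae_prod_iff_ae_ae m1).2 ((Measure.ae_ae_comm m1).2 ?_)
  refine Eventually.of_forall fun y => ?_
  have h1 : ∀ᵐ x : V n, x ≠ y := by simp [ae_iff]
  have h2 : ∀ᵐ x : V n, x ≠ refl e s y := by simp [ae_iff]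
  filter_upwards [h1, h2] with x a b using ⟨a, b⟩

lemma En_pol_le [NeZero n] {J : ℝ → ℝ} (hJ : JJ J) {g : V n → ℝ} (hg : Ker g) {e : V n}
    (he : ‖e‖ = 1) (s : ℝ)
    {u v : V n → ℝ} (hu : Measurable u) (hv : Measurable v) :
    En J g (pol e s u) (pol e s v) ≤ En J g u v := by
  have : 4 * En J g (pol e s u) (pol e s v) ≤ 4 * En J g u v := by
    rw [En_four hJ hg he s hu hv, En_four hJ hg he s (measurable_pol hu) (measurable_pol hv)]
    apply lintegral_mono_ae
    filter_upwards [ae_off_diag (e := e) s] with p hp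
    exact ENNReal.ofReal_le_ofReal (Qs_pol hJ hg he hp.1 hp.2).1
  exact (ENNReal.mul_le_mul_iff_right (by norm_num) (by norm_num)).1 this

lemma En_pol_eq [NeZero n] {J : ℝ → ℝ} (hJ : JJ J) {g : V n → ℝ} (hg : Ker g) {e : V n}
    (he : ‖e‖ = 1) (s : ℝ)
    {u v : V n → ℝ} (hu : Measurable u) (hv : Measurable v) (hfin : En J g u v ≠ ⊤)
    (h : En J g u v ≤ En J g (pol e s u) (pol e s v)) :
    ∀ᵐ p : V n × V n ∂(volume.prod volume),
      0 ≤ (ell e s p.1 * ell e s p.2) *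
        ((u p.1 - u (refl e s p.1)) * (v p.2 - v (refl e s p.2))) := by
  have h4 : 4 * En J g u v ≤ 4 * En J g (pol e s u) (pol e s v) := by gcongr
  have hf4 : 4 * En J g (pol e s u) (pol e s v) ≠ ⊤ :=
    ENNReal.mul_ne_top (by norm_num) (ne_top_of_le_ne_top hfin (En_pol_le hJ hg he s hu hv))
  rw [En_four hJ hg he s hu hv, En_four hJ hg he s (measurable_pol hu) (measurable_pol hv)] at h4
  rw [En_four hJ hg he s (measurable_pol hu) (measurable_pol hv)] at hf4
  have hm : Measurable fun p => ENNReal.ofReal (Qs J g e s u v p) := by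
    unfold Qs
    have := hJ.cont.measurable
    have := hg.meas
    have : Measurable (refl e s) := (continuous_refl' e s).measurable
    fun_prop
  have := ae_eq_of_ae_le_of_lintegral_le (by
    filter_upwards [ae_off_diag (e := e) s] with p hp
    exact ENNReal.ofReal_le_ofReal (Qs_pol hJ hg he hp.1 hp.2).1) hf4 hm.aemeasurable h4
  filter_upwards [this, ae_off_diag (e := e) s] with p h1 hp
  by_contra! hc
  have h2 := (Qs_pol hJ hg he hp.1 hp.2).2 hc
  have h3 := (ENNReal.ofReal_eq_ofReal_iff (Qs_nonneg hJ hg p) (Qs_nonneg hJ hg p)).1 h1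
  linarith

end RR

open MeasureTheory Real
namespace RR
open Filter Topology Set
open scoped ENNReal
variable {n : ℕ}

lemma vol_ball_formula [NeZero n] (c : V n) {r : ℝ} (hr : 0 ≤ r) :
    volume (Metric.ball c r) = ENNReal.ofReal (r ^ n) * volume (Metric.ball (0 : V n) 1) := by
  have := Measure.addHaar_ball (volume : Measure (V n)) c hr
  simpa using this

lemma omega_pos [NeZero n] : 0 < (volume (Metric.ball (0 : V n) 1)).toReal :=
  ENNReal.toReal_pos (Metric.measure_ball_pos _ _ one_pos).ne' measure_ball_lt_top.ne

lemma radius_nonneg (A : Set (V n)) : 0 ≤ schwarzRadius n A := by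
  unfold schwarzRadius; positivity

lemma vol_ball_radius [NeZero n] (c : V n) {A : Set (V n)} (hA : volume A ≠ ⊤) :
    volume (Metric.ball c (schwarzRadius n A)) = volume A := by
  rw [vol_ball_formula c (radius_nonneg A)]
  have h := omega_pos (n := n)
  have hn : (n : ℝ) ≠ 0 := Nat.cast_ne_zero.2 (NeZero.ne n)
  have : schwarzRadius n A ^ n =
      (volume A).toReal / (volume (Metric.ball (0 : V n) 1)).toReal := by
    unfold schwarzRadius
    rw [← Real.rpow_natCast, ← Real.rpow_mul (by positivity), inv_mul_cancel₀ hn, Real.rpow_one]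
  rw [this]
  nth_rw 2 [← ENNReal.ofReal_toReal (measure_ball_lt_top (μ := (volume : Measure (V n)))
    (x := 0) (r := 1)).ne]
  rw [← ENNReal.ofReal_mul (by positivity), div_mul_cancel₀ _ h.ne', ENNReal.ofReal_toReal hA]

lemma vol_ball_lt [NeZero n] (c d : V n) {r R : ℝ} (hr : 0 ≤ r) (h : r < R) :
    volume (Metric.ball c r) < volume (Metric.ball d R) := by
  rw [vol_ball_formula c hr, vol_ball_formula d (hr.trans h.le)]
  rw [ENNReal.mul_lt_mul_iff_left (Metric.measure_ball_pos _ _ one_pos).ne' measure_ball_lt_top.ne]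
  have : r ^ n < R ^ n := pow_lt_pow_left₀ h hr (NeZero.ne n)
  exact (ENNReal.ofReal_lt_ofReal_iff ((pow_nonneg hr n).trans_lt this)).2 this

lemma vol_ball_le [NeZero n] (c d : V n) {r R : ℝ} (h : r ≤ R) :
    volume (Metric.ball c r) ≤ volume (Metric.ball d R) := by
  rcases lt_or_ge r 0 with hr | hr
  · rw [Metric.ball_eq_empty.2 hr.le]; simp
  · rw [vol_ball_formula c hr, vol_ball_formula d (hr.trans h)]
    gcongr

lemma lt_radius_iff [NeZero n] (c : V n) {A : Set (V n)} (hA : volume A ≠ ⊤) {r : ℝ} (hr : 0 ≤ r) :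
    r < schwarzRadius n A ↔ volume (Metric.ball c r) < volume A := by
  constructor
  · intro h
    rw [← vol_ball_radius c hA]; exact vol_ball_lt c c hr h
  · intro h
    by_contra! h2
    rw [← vol_ball_radius c hA] at h
    exact absurd h (not_lt.2 (vol_ball_le c c h2))

/-- admissible functions -/
structure Adm (u : V n → ℝ) : Prop where
  meas : Measurable u
  nonneg : ∀ x, 0 ≤ u x
  fin : ∀ τ : ℝ, 0 < τ → volume {x | τ < u x} < ⊤

lemma level_cont {u : V n → ℝ} {c : ℝ≥0∞} {t : ℝ} (h : c < volume {x | t < u x}) :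
    ∃ s, t < s ∧ c < volume {x | s < u x} := by
  have h1 : {x | t < u x} = ⋃ k : ℕ, {x | t + 1 / ((k : ℝ) + 1) < u x} := by
    ext x
    simp only [mem_ofPred_eq, mem_iUnion]
    constructor
    · intro hx
      obtain ⟨k, hk⟩ := exists_nat_one_div_lt (sub_pos.2 hx)
      exact ⟨k, by linarith⟩
    · rintro ⟨k, hk⟩
      have : (0 : ℝ) < 1 / ((k : ℝ) + 1) := by positivity
      linarith
  have hmono : Monotone fun k : ℕ => {x | t + 1 / ((k : ℝ) + 1) < u x} := by
    intro i j hij x hx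
    simp only [mem_ofPred_eq] at *
    have : 1 / ((j : ℝ) + 1) ≤ 1 / ((i : ℝ) + 1) := by
      apply one_div_le_one_div_of_le (by positivity)
      have : (i : ℝ) ≤ j := by exact_mod_cast hij
      linarith
    linarith
  rw [h1, hmono.measure_iUnion] at h
  obtain ⟨k, hk⟩ := lt_iSup_iff.1 h
  exact ⟨_, by linarith [show (0 : ℝ) < 1 / ((k : ℝ) + 1) by positivity], hk⟩

lemma level_small {u : V n → ℝ} (hu : Adm u) {c : ℝ≥0∞} (hc : 0 < c) :
    ∃ s, 0 < s ∧ volume {x | s < u x} < c := by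
  have h1 : ⋂ k : ℕ, {x | (k : ℝ) + 1 < u x} = ∅ := by
    ext x
    simp only [mem_iInter, mem_ofPred_eq, mem_empty_iff_false, iff_false, not_forall, not_lt]
    obtain ⟨k, hk⟩ := exists_nat_ge (u x)
    exact ⟨k, by linarith⟩
  have h2 : Tendsto (fun k : ℕ => volume {x | (k : ℝ) + 1 < u x}) atTop
      (𝓝 (volume (⋂ k : ℕ, {x | (k : ℝ) + 1 < u x}))) := by
    apply tendsto_measure_iInter_atTop
    · intro k
      exact (measurableSet_lt measurable_const hu.meas).nullMeasurableSet
    · intro i j hij x hx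
      simp only [mem_ofPred_eq] at *
      have : (i : ℝ) ≤ j := by exact_mod_cast hij
      linarith
    · exact ⟨0, (hu.fin _ (by positivity)).ne⟩
  rw [h1, measure_empty] at h2
  obtain ⟨k, hk⟩ := (h2.eventually (gt_mem_nhds hc)).exists
  exact ⟨k + 1, by positivity, hk⟩

lemma level_anti {u : V n → ℝ} {s t : ℝ} (h : s ≤ t) :
    volume {x | t < u x} ≤ volume {x | s < u x} :=
  measure_mono fun x hx => lt_of_le_of_lt h hx

lemma star_nonneg (u : V n → ℝ) (x : V n) : 0 ≤ schwarzRearr n u x := by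
  unfold schwarzRearr
  apply integral_nonneg
  intro t
  exact indicator_nonneg (fun _ _ => zero_le_one) _

lemma star_lt [NeZero n] {u : V n → ℝ} (hu : Adm u) {x : V n} (hx : x ≠ 0) {t : ℝ} (ht : 0 < t) :
    t < schwarzRearr n u x ↔ volume (Metric.ball (0 : V n) ‖x‖) < volume {y | t < u y} := by
  set c := volume (Metric.ball (0 : V n) ‖x‖) with hc
  have hcpos : 0 < c := Metric.measure_ball_pos _ _ (norm_pos_iff.2 hx)
  set T : Set ℝ := {t | 0 < t ∧ c < volume {y | t < u y}} with hT
  obtain ⟨b, hb0, hb⟩ := level_small hu hcpos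
  have hbd : BddAbove T := by
    refine ⟨b, fun t ht => ?_⟩
    by_contra! h
    exact absurd (ht.2.trans_le (level_anti h.le)) (not_lt.2 hb.le)
  have hTeq : T = Ioo 0 (sSup T) := by
    ext t
    constructor
    · intro h
      obtain ⟨s, hs, hs2⟩ := level_cont h.2
      exact ⟨h.1, lt_of_lt_of_le hs (le_csSup hbd ⟨h.1.trans hs, hs2⟩)⟩
    · rintro ⟨h1, h2⟩
      have hne : T.Nonempty := by
        by_contra hne
        rw [not_nonempty_iff_eq_empty] at hne
        rw [hne, Real.sSup_empty] at h2; linarith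
      obtain ⟨s, hs, hs2⟩ := exists_lt_of_lt_csSup hne h2
      exact ⟨h1, hs.2.trans_le (level_anti hs2.le)⟩
  have hS0 : 0 ≤ sSup T := Real.sSup_nonneg fun t ht => ht.1.le
  have hval : schwarzRearr n u x = sSup T := by
    unfold schwarzRearr
    have : ∀ t ∈ Ioi (0 : ℝ), (schwarzSet n {y | t < |u y|}).indicator (fun _ => (1 : ℝ)) x
        = (Ioo 0 (sSup T)).indicator (fun _ => (1 : ℝ)) t := by
      intro t ht
      have e1 : {y | t < |u y|} = {y | t < u y} := by
        ext y; simp only [mem_ofPred_eq, abs_of_nonneg (hu.nonneg y)]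
      rw [e1, ← hTeq]
      have : x ∈ schwarzSet n {y | t < u y} ↔ t ∈ T := by
        unfold schwarzSet
        rw [mem_ball_zero_iff, lt_radius_iff 0 (hu.fin t ht).ne (norm_nonneg x)]
        exact ⟨fun h => ⟨ht, h⟩, fun h => h.2⟩
      simp only [indicator, this]
    rw [setIntegral_congr_fun measurableSet_Ioi this, setIntegral_indicator measurableSet_Ioo]
    rw [show Ioi (0 : ℝ) ∩ Ioo 0 (sSup T) = Ioo 0 (sSup T) from
      inter_eq_right.2 Ioo_subset_Ioi_self]
    simp [hS0]
  rw [hval]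
  have : t ∈ T ↔ t ∈ Ioo 0 (sSup T) := by rw [← hTeq]
  constructor
  · intro h; exact (this.2 ⟨ht, h⟩).2
  · intro h; exact (this.1 ⟨ht, h⟩).2

lemma eq_of_pos_lt {a b : ℝ} (ha : 0 ≤ a) (hb : 0 ≤ b) (h : ∀ t, 0 < t → (t < a ↔ t < b)) :
    a = b := by
  apply le_antisymm
  · by_contra! hc
    obtain ⟨t, h1, h2⟩ := exists_between hc
    exact absurd ((h t (by linarith)).1 h2) (by linarith)
  · by_contra! hc
    obtain ⟨t, h1, h2⟩ := exists_between hc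
    exact absurd ((h t (by linarith)).2 h2) (by linarith)

lemma star_level_ae [NeZero n] {u : V n → ℝ} (hu : Adm u) {t : ℝ} (ht : 0 < t) :
    {x | t < schwarzRearr n u x} \ {0} =
      Metric.ball (0 : V n) (schwarzRadius n {y | t < u y}) \ {0} := by
  ext x
  simp only [mem_diff, mem_ofPred_eq, mem_singleton_iff, mem_ball_zero_iff]
  refine and_congr_left fun hx => ?_
  rw [star_lt hu hx ht, lt_radius_iff 0 (hu.fin t ht).ne (norm_nonneg x)]

lemma star_meas [NeZero n] {u : V n → ℝ} (hu : Adm u) : Measurable (schwarzRearr n u) := by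
  have pos : ∀ t : ℝ, 0 < t → MeasurableSet {x | t < schwarzRearr n u x} := by
    intro t ht
    rw [← diff_union_inter {x | t < schwarzRearr n u x} {0}, star_level_ae hu ht]
    refine (measurableSet_ball.diff (measurableSet_singleton 0)).union ?_
    exact (subsingleton_singleton.anti inter_subset_right).measurableSet
  apply measurable_of_Ioi
  intro t
  rcases lt_trichotomy t 0 with h | h | h
  · have : schwarzRearr n u ⁻¹' Ioi t = univ := by
      ext x; simpa using h.trans_le (star_nonneg u x)
    rw [this]; exact MeasurableSet.univ
  · have : schwarzRearr n u ⁻¹' Ioi t =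
        ⋃ k : ℕ, {x | 1 / ((k : ℝ) + 1) < schwarzRearr n u x} := by
      ext x
      simp only [mem_preimage, mem_Ioi, mem_iUnion, mem_ofPred_eq, h]
      constructor
      · intro hx
        exact exists_nat_one_div_lt hx
      · rintro ⟨k, hk⟩
        have : (0 : ℝ) < 1 / ((k : ℝ) + 1) := by positivity
        linarith
    rw [this]
    exact MeasurableSet.iUnion fun k => pos _ (by positivity)
  · exact pos t h

lemma star_vol [NeZero n] {u : V n → ℝ} (hu : Adm u) {t : ℝ} (ht : 0 < t) :
    volume {x | t < schwarzRearr n u x} = volume {x | t < u x} := by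
  rw [← measure_diff_null (measure_singleton (0 : V n)), star_level_ae hu ht,
    measure_diff_null (measure_singleton (0 : V n)), vol_ball_radius 0 (hu.fin t ht).ne]

lemma star_congr {u w : V n → ℝ} (hu : ∀ x, 0 ≤ u x) (hw : ∀ x, 0 ≤ w x)
    (h : ∀ t, 0 < t → volume {x | t < u x} = volume {x | t < w x}) :
    schwarzRearr n u = schwarzRearr n w := by
  funext x
  unfold schwarzRearr
  apply setIntegral_congr_fun measurableSet_Ioi
  intro t ht
  simp only
  have : schwarzSet n {y | t < |u y|} = schwarzSet n {y | t < |w y|} := by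
    unfold schwarzSet schwarzRadius
    simp only [abs_of_nonneg (hu _), abs_of_nonneg (hw _), h t ht]
  rw [this]

lemma Adm.pol {e : V n} (he : ‖e‖ = 1) (s : ℝ) {u : V n → ℝ} (hu : Adm u) : Adm (pol e s u) :=
  ⟨measurable_pol hu.meas, pol_nonneg hu.nonneg, fun τ hτ => by
    rw [vol_pol he s hu.meas]; exact hu.fin τ hτ⟩

lemma star_pol {e : V n} (he : ‖e‖ = 1) (s : ℝ) {u : V n → ℝ} (hu : Adm u) :
    schwarzRearr n (RR.pol e s u) = schwarzRearr n u :=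
  star_congr (pol_nonneg hu.nonneg) hu.nonneg fun t _ => vol_pol he s hu.meas t

lemma ae_ne_zero [NeZero n] : ∀ᵐ x : V n, x ≠ 0 := by simp [ae_iff]

/-- energy only depends on a.e. classes -/
lemma En_congr {J : ℝ → ℝ} {g : V n → ℝ} {u u' v v' : V n → ℝ} (h : u =ᵐ[volume] u')
    (h' : v =ᵐ[volume] v') : En J g u v = En J g u' v' := by
  unfold En
  apply lintegral_congr_ae
  filter_upwards [h] with x hx
  apply lintegral_congr_ae
  filter_upwards [h'] with y hy
  rw [hx, hy]

/-- lower semicontinuity of the energy -/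
lemma En_fatou {J : ℝ → ℝ} (hJ : JJ J) {g : V n → ℝ} (hg : Ker g)
    {u v : V n → ℝ} {U W : ℕ → V n → ℝ} (hU : ∀ k, Measurable (U k)) (hW : ∀ k, Measurable (W k))
    (h : ∀ᵐ x, Tendsto (fun k => U k x) atTop (𝓝 (u x)))
    (h' : ∀ᵐ x, Tendsto (fun k => W k x) atTop (𝓝 (v x))) {C : ℝ≥0∞}
    (hC : ∀ k, En J g (U k) (W k) ≤ C) : En J g u v ≤ C := by
  have hmeas := fun k => ep_meas hJ hg (hU k) (hW k)
  calc En J g u v ≤ ∫⁻ x, ∫⁻ y, liminf (fun k => ep J g (U k) (W k) (x, y)) atTop := by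
        unfold En
        apply lintegral_mono_ae
        filter_upwards [h] with x hx
        apply lintegral_mono_ae
        filter_upwards [h'] with y hy
        have : Tendsto (fun k => ep J g (U k) (W k) (x, y)) atTop
            (𝓝 (ENNReal.ofReal (J (u x - v y) * g (x - y)))) := by
          unfold ep
          apply ENNReal.tendsto_ofReal
          exact ((hJ.cont.tendsto _).comp (hx.sub hy)).mul_const _
        rw [this.liminf_eq]
    _ ≤ ∫⁻ x, liminf (fun k => ∫⁻ y, ep J g (U k) (W k) (x, y)) atTop := by
        apply lintegral_mono
        intro x
        exact lintegral_liminf_le fun k => (hmeas k).comp measurable_prodMk_left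
    _ ≤ liminf (fun k => ∫⁻ x, ∫⁻ y, ep J g (U k) (W k) (x, y)) atTop :=
        lintegral_liminf_le fun k => (hmeas k).lintegral_prod_right'
    _ ≤ C := by
        apply Filter.liminf_le_of_frequently_le'
        exact (Eventually.of_forall hC).frequently

end RR

open MeasureTheory Real
namespace RR
open Filter Topology Set
open scoped ENNReal
variable {n : ℕ}

/-- compact class of functions -/
structure Cl (M R : ℝ) (δ : ℝ → ℝ) (w : V n → ℝ) : Prop where
  nonneg : ∀ x, 0 ≤ w x
  le : ∀ x, w x ≤ M
  supp : ∀ x, R < ‖x‖ → w x = 0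
  mod : ∀ ε, 0 < ε → ∀ x y, ‖x - y‖ < δ ε → |w x - w y| ≤ ε

lemma Cl.cont {M R : ℝ} {δ : ℝ → ℝ} (hδ : ∀ ε, 0 < ε → 0 < δ ε) {w : V n → ℝ}
    (h : Cl M R δ w) : Continuous w := by
  rw [Metric.continuous_iff]
  intro b ε hε
  refine ⟨δ (ε / 2), hδ _ (by linarith), fun a ha => ?_⟩
  rw [dist_eq_norm] at *
  have := h.mod (ε / 2) (by linarith) a b ha
  rw [norm_eq_abs]; linarith

lemma Cl_compact (M R : ℝ) {δ : ℝ → ℝ} (hδ : ∀ ε, 0 < ε → 0 < δ ε) :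
    IsCompact {w : C(V n, ℝ) | Cl M R δ w} := by
  apply ArzelaAscoli.isCompact_of_equicontinuous
  · have himg : ContinuousMap.toFun '' {w : C(V n, ℝ) | Cl M R δ w} =
        {f : V n → ℝ | Cl M R δ f} := by
      ext f
      constructor
      · rintro ⟨w, hw, rfl⟩; exact hw
      · intro hf; exact ⟨⟨f, Cl.cont hδ hf⟩, hf, rfl⟩
    rw [himg]
    apply IsCompact.of_isClosed_subset (isCompact_univ_pi fun _ : V n => isCompact_Icc (a := 0) (b := M))
    · have : {f : V n → ℝ | Cl M R δ f} = {f | ∀ x, 0 ≤ f x} ∩ {f | ∀ x, f x ≤ M} ∩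
        {f | ∀ x, R < ‖x‖ → f x = 0} ∩
        {f | ∀ ε, 0 < ε → ∀ x y, ‖x - y‖ < δ ε → |f x - f y| ≤ ε} := by
        ext f
        constructor
        · intro h; exact ⟨⟨⟨h.1, h.2⟩, h.3⟩, h.4⟩
        · intro h; exact ⟨h.1.1.1, h.1.1.2, h.1.2, h.2⟩
      rw [this]
      refine ((IsClosed.inter ?_ ?_).inter ?_).inter ?_
      · simp only [setOf_forall]
        exact isClosed_iInter fun x => isClosed_le continuous_const (continuous_apply x)
      · simp only [setOf_forall]
        exact isClosed_iInter fun x => isClosed_le (continuous_apply x) continuous_const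
      · simp only [setOf_forall]
        exact isClosed_iInter fun x => isClosed_iInter fun _ =>
          isClosed_eq (continuous_apply x) continuous_const
      · simp only [setOf_forall]
        exact isClosed_iInter fun ε => isClosed_iInter fun _ => isClosed_iInter fun x =>
          isClosed_iInter fun y => isClosed_iInter fun _ =>
            isClosed_le ((continuous_apply x).sub (continuous_apply y)).abs continuous_const
    · intro f hf x _
      exact ⟨hf.nonneg x, hf.le x⟩
  · intro x₀
    rw [Metric.equicontinuousAt_iff]
    intro ε hε
    refine ⟨δ (ε / 2), hδ _ (by linarith), fun x hx i => ?_⟩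
    rw [dist_comm, dist_eq_norm] at *
    have := i.2.mod (ε / 2) (by linarith) x x₀ (by rwa [norm_sub_rev] )
    rw [norm_eq_abs, abs_sub_comm] at *
    rw [abs_sub_comm] at this
    first
      | (rw [abs_sub_comm]; linarith)
      | linarith

lemma ell_zero (e : V n) (s : ℝ) : ell e s 0 = -s := by simp [ell]

lemma norm_refl_sq {e : V n} (he : ‖e‖ = 1) (s : ℝ) (x : V n) :
    ‖refl e s x‖ ^ 2 = ‖x‖ ^ 2 - 4 * s * ell e s x := by
  have := norm_sub_refl_sq he s 0 x
  rw [zero_sub, norm_neg, zero_sub, norm_neg, ell_zero] at this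
  rw [this]; ring

lemma Cl.pol {M R : ℝ} {δ : ℝ → ℝ} {w : V n → ℝ}
    (h : Cl M R δ w) {e : V n} (he : ‖e‖ = 1) {s : ℝ} (hs : s ≤ 0) : Cl M R δ (pol e s w) := by
  refine ⟨pol_nonneg h.nonneg, fun x => ?_, fun x hx => ?_, fun ε hε x y hxy => ?_⟩
  · unfold RR.pol; split_ifs
    · exact max_le (h.le _) (h.le _)
    · exact min_le_of_left_le (h.le _)
  · unfold RR.pol
    rw [h.supp x hx]
    split_ifs with hl
    · have h2 : ‖x‖ ≤ ‖refl e s x‖ := by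
        rw [← sq_le_sq₀ (norm_nonneg _) (norm_nonneg _), norm_refl_sq he]
        nlinarith
      rw [h.supp _ (hx.trans_le h2)]; simp
    · exact min_eq_left (h.nonneg _)
  · have a1 := h.mod ε hε x y hxy
    have a2 := h.mod ε hε (refl e s x) (refl e s y) (by rwa [norm_refl_sub_refl he])
    have cross : ell e s x * ell e s y ≤ 0 → |w x - w (refl e s y)| ≤ ε ∧
        |w (refl e s x) - w y| ≤ ε := by
      intro hl
      have : ‖x - refl e s y‖ ≤ ‖x - y‖ := by
        rw [← sq_le_sq₀ (norm_nonneg _) (norm_nonneg _), norm_sub_refl_sq he]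
        nlinarith
      exact ⟨h.mod ε hε _ _ (this.trans_lt hxy),
        h.mod ε hε _ _ (by rw [norm_sub_refl_comm he]; exact this.trans_lt hxy)⟩
    unfold RR.pol
    rw [abs_le] at a1 a2
    split_ifs with h1 h2 h2
    · rw [abs_le]
      rcases max_cases (w x) (w (refl e s x)) with ⟨p, p'⟩ | ⟨p, p'⟩ <;>
      rcases max_cases (w y) (w (refl e s y)) with ⟨q, q'⟩ | ⟨q, q'⟩ <;> rw [p, q] <;>
      constructor <;> linarith
    · obtain ⟨c1, c2⟩ := cross (by nlinarith)
      rw [abs_le] at *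
      rcases max_cases (w x) (w (refl e s x)) with ⟨p, p'⟩ | ⟨p, p'⟩ <;>
      rcases min_cases (w y) (w (refl e s y)) with ⟨q, q'⟩ | ⟨q, q'⟩ <;> rw [p, q] <;>
      constructor <;> linarith
    · obtain ⟨c1, c2⟩ := cross (by nlinarith)
      rw [abs_le] at *
      rcases min_cases (w x) (w (refl e s x)) with ⟨p, p'⟩ | ⟨p, p'⟩ <;>
      rcases max_cases (w y) (w (refl e s y)) with ⟨q, q'⟩ | ⟨q, q'⟩ <;> rw [p, q] <;>
      constructor <;> linarith
    · rw [abs_le]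
      rcases min_cases (w x) (w (refl e s x)) with ⟨p, p'⟩ | ⟨p, p'⟩ <;>
      rcases min_cases (w y) (w (refl e s y)) with ⟨q, q'⟩ | ⟨q, q'⟩ <;> rw [p, q] <;>
      constructor <;> linarith

/-- second moment -/
noncomputable def Mo (w : V n → ℝ) : ℝ := ∫ x, ‖x‖ ^ 2 * w x

lemma Cl.integrable {M R : ℝ} {δ : ℝ → ℝ} (hδ : ∀ ε, 0 < ε → 0 < δ ε) {w : V n → ℝ}
    (h : Cl M R δ w) : Integrable fun x => ‖x‖ ^ 2 * w x := by
  apply Continuous.integrable_of_hasCompactSupport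
  · have := h.cont hδ
    fun_prop
  · apply HasCompactSupport.intro (isCompact_closedBall (0 : V n) R)
    intro x hx
    rw [mem_closedBall_zero_iff, not_le] at hx
    rw [h.supp x hx, mul_zero]

lemma Mo_tendsto {M R : ℝ} {δ : ℝ → ℝ} (hδ : ∀ ε, 0 < ε → 0 < δ ε) {W : ℕ → V n → ℝ} {w : V n → ℝ}
    (hW : ∀ k, Cl M R δ (W k)) (h : ∀ x, Tendsto (fun k => W k x) atTop (𝓝 (w x))) :
    Tendsto (fun k => Mo (W k)) atTop (𝓝 (Mo w)) := by
  unfold Mo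
  apply tendsto_integral_of_dominated_convergence
    ((Metric.closedBall (0 : V n) R).indicator fun _ => R ^ 2 * M)
  · intro k
    exact ((hW k).integrable hδ).aestronglyMeasurable
  · rw [integrable_indicator_iff measurableSet_closedBall]
    exact integrableOn_const measure_closedBall_lt_top.ne
  · intro k
    refine Eventually.of_forall fun x => ?_
    by_cases hx : x ∈ Metric.closedBall (0 : V n) R
    · rw [indicator_of_mem hx]
      rw [mem_closedBall_zero_iff] at hx
      rw [norm_eq_abs, abs_of_nonneg (mul_nonneg (by positivity) ((hW k).nonneg x))]
      have := (hW k).nonneg x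
      have := (hW k).le x
      gcongr
    · rw [indicator_of_notMem hx]
      rw [mem_closedBall_zero_iff, not_le] at hx
      rw [(hW k).supp x hx]; simp
  · exact Eventually.of_forall fun x => (h x).const_mul _

lemma Mo_pol {M R : ℝ} {δ : ℝ → ℝ} (hδ : ∀ ε, 0 < ε → 0 < δ ε) {w : V n → ℝ}
    (h : Cl M R δ w) {e : V n} (he : ‖e‖ = 1) {s : ℝ} (hs : s < 0) :
    Mo (pol e s w) ≤ Mo w ∧ (Mo w ≤ Mo (pol e s w) →
      ∀ x, 0 < ell e s x → w (refl e s x) ≤ w x) := by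
  have hp := h.pol he hs.le
  have key : ∀ z : V n → ℝ, Cl M R δ z →
      Integrable (fun x => ‖x‖ ^ 2 * z x + ‖refl e s x‖ ^ 2 * z (refl e s x)) ∧
      2 * Mo z = ∫ x, (‖x‖ ^ 2 * z x + ‖refl e s x‖ ^ 2 * z (refl e s x)) := by
    intro z hz
    have i1 := hz.integrable hδ
    have i2 : Integrable (fun x => ‖refl e s x‖ ^ 2 * z (refl e s x)) :=
      (mp_refl he s).integrable_comp_of_integrable i1
    refine ⟨i1.add i2, ?_⟩
    rw [integral_add i1 i2]
    have : ∫ x, ‖refl e s x‖ ^ 2 * z (refl e s x) = Mo z := by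
      unfold Mo
      have h1 := integral_map (μ := (volume : Measure (V n))) (mp_refl he s).measurable.aemeasurable
        (f := fun x => ‖x‖ ^ 2 * z x) (by rw [(mp_refl he s).map_eq]; exact i1.aestronglyMeasurable)
      rw [(mp_refl he s).map_eq] at h1
      exact h1.symm
    rw [this]; unfold Mo; ring
  obtain ⟨k1, k2⟩ := key w h
  obtain ⟨k3, k4⟩ := key _ hp
  set d : V n → ℝ := fun x => (‖x‖ ^ 2 * w x + ‖refl e s x‖ ^ 2 * w (refl e s x)) -
    (‖x‖ ^ 2 * pol e s w x + ‖refl e s x‖ ^ 2 * pol e s w (refl e s x)) with hd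
  have hInt0 : ∫ x, d x = 2 * Mo w - 2 * Mo (pol e s w) := by
    rw [k2, k4]; exact integral_sub k1 k3
  have hd0 : ∀ x, 0 ≤ d x := by
    intro x
    simp only [hd]
    rcases pol_pair he s w x with ⟨a, a', ha⟩ | ⟨a, a', ha⟩
    · rw [a, a']; simp
    · rw [a, a', norm_refl_sq he]
      nlinarith [mul_nonneg (neg_nonneg.2 hs.le) (neg_nonneg.2 ha)]
  have hI : 0 ≤ ∫ x, d x := integral_nonneg (fun x => hd0 x)
  refine ⟨by linarith [hI], fun hle x hx => ?_⟩
  have hz : ∫ x, d x = 0 := le_antisymm (by linarith) hI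
  have hcw := h.cont hδ
  have hcp := hp.cont hδ
  have hcr := continuous_refl' e s
  have hcd : Continuous d := by simp only [hd]; fun_prop
  have hae := (integral_eq_zero_iff_of_nonneg (fun x => hd0 x) (k1.sub k3)).1 hz
  have hall := (Continuous.ae_eq_iff_eq volume hcd continuous_const).1 hae
  have hx0 : d x = 0 := congrFun hall x
  by_contra! hc
  simp only [hd] at hx0
  have e1 : pol e s w x = w (refl e s x) := by
    unfold pol; rw [if_pos hx.le]; exact max_eq_right hc.le
  have e2 : pol e s w (refl e s x) = w x := by
    unfold pol; rw [ell_refl he, if_neg (by linarith), refl_refl he]; exact min_eq_right hc.le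
  rw [e1, e2, norm_refl_sq he] at hx0
  nlinarith [mul_pos (mul_pos (neg_pos.2 hs) hx) (sub_pos.2 hc)]

/-- bisector -/
lemma exists_bisector {x y : V n} (hxy : x ≠ y) :
    ∃ (e : V n) (s : ℝ), ‖e‖ = 1 ∧ refl e s x = y ∧ 0 < ell e s x ∧
      ∀ a, ‖x - a‖ < ‖y - a‖ → 0 < ell e s a := by
  have hp : 0 < ‖x - y‖ := norm_pos_iff.2 (sub_ne_zero.2 hxy)
  set e : V n := (‖x - y‖)⁻¹ • (x - y) with he
  have he1 : ‖e‖ = 1 := by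
    rw [he, norm_smul, norm_inv, norm_norm, inv_mul_cancel₀ hp.ne']
  set s : ℝ := inner ℝ e x - ‖x - y‖ / 2 with hs
  have hl : ell e s x = ‖x - y‖ / 2 := by unfold ell; rw [hs]; ring
  have hr : refl e s x = y := by
    unfold refl
    rw [hl, he, smul_smul, show 2 * (‖x - y‖ / 2) * ‖x - y‖⁻¹ = 1 by field_simp]
    simp
  refine ⟨e, s, he1, hr, by rw [hl]; linarith, fun a ha => ?_⟩
  rw [norm_sub_rev x, norm_sub_rev y] at ha
  have := (norm_sub_lt_iff he1 s a x).1 (by rw [hr]; exact ha)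
  exact (pos_iff_pos_of_mul_pos this).2 (by rw [hl]; linarith)

/-- a radially decreasing continuous function is its own rearrangement -/
lemma star_of_radial [NeZero n] {u w : V n → ℝ} (hu : Adm u) (hw : Continuous w)
    (hw0 : ∀ x, 0 ≤ w x)
    (hr : ∀ x y, ‖x‖ < ‖y‖ → w y ≤ w x) (hl : ∀ t, 0 < t → volume {x | t < w x} = volume {x | t < u x})
    {x : V n} (hx : x ≠ 0) : schwarzRearr n u x = w x := by
  apply eq_of_pos_lt (star_nonneg u x) (hw0 x)
  intro t ht
  rw [star_lt hu hx ht, ← hl t ht]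
  constructor
  · intro h
    by_contra! hc
    have : {y | t < w y} ⊆ Metric.closedBall 0 ‖x‖ := by
      intro y hy
      rw [mem_closedBall_zero_iff]
      by_contra! h2
      exact absurd (hr x y h2) (not_le.2 (lt_of_le_of_lt hc hy))
    have h3 := measure_mono (μ := volume) this
    rw [Measure.addHaar_closedBall_eq_addHaar_ball] at h3
    exact absurd h (not_lt.2 h3)
  · intro h
    have hopen : IsOpen {y | t < w y} := isOpen_lt continuous_const hw
    have hcont : Tendsto (fun η : ℝ => (1 + η) • x) (𝓝[>] 0) (𝓝 x) := by
      have : Continuous fun η : ℝ => (1 + η) • x := by fun_prop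
      have h2 := this.tendsto 0
      simp only [add_zero, one_smul] at h2
      exact h2.mono_left nhdsWithin_le_nhds
    have hev := hcont.eventually (hopen.mem_nhds h)
    obtain ⟨η, hη1, hη⟩ := (hev.and self_mem_nhdsWithin).exists
    have hη : 0 < η := hη
    have hpos : 0 < ‖x‖ := norm_pos_iff.2 hx
    have hnorm : ‖x‖ < ‖(1 + η) • x‖ := by
      rw [norm_smul, norm_eq_abs, abs_of_pos (by linarith)]
      nlinarith
    calc volume (Metric.ball (0 : V n) ‖x‖) < volume (Metric.ball (0 : V n) ‖(1 + η) • x‖) :=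
          vol_ball_lt 0 0 (norm_nonneg _) hnorm
      _ ≤ volume {y | t < w y} := by
          apply measure_mono
          intro y hy
          rw [mem_ball_zero_iff] at hy
          exact lt_of_lt_of_le hη1 (hr y _ hy)

end RR

open MeasureTheory Real
namespace RR
open Filter Topology Set
open scoped ENNReal
variable {n : ℕ}

lemma Cl_unif {M R : ℝ} {δ : ℝ → ℝ} {W : ℕ → C(V n, ℝ)} {w : C(V n, ℝ)}
    (hW : ∀ k, Cl M R δ (W k)) (hw : Cl M R δ w) (h : Tendsto W atTop (𝓝 w)) :
    ∀ ε, 0 < ε → ∀ᶠ k in atTop, ∀ x, |W k x - w x| < ε := by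
  intro ε hε
  rw [ContinuousMap.tendsto_iff_forall_isCompact_tendstoUniformlyOn] at h
  have h1 := h _ (isCompact_closedBall (0 : V n) R)
  rw [Metric.tendstoUniformlyOn_iff] at h1
  filter_upwards [h1 ε hε] with k hk x
  by_cases hx : x ∈ Metric.closedBall (0 : V n) R
  · have := hk x hx
    rwa [dist_comm, Real.dist_eq] at this
  · rw [mem_closedBall_zero_iff, not_le] at hx
    rw [(hW k).supp x hx, hw.supp x hx]; simpa using hε

lemma level_lim {W : ℕ → V n → ℝ} {w u : V n → ℝ}
    (h : ∀ ε, 0 < ε → ∀ᶠ k in atTop, ∀ x, |W k x - w x| < ε)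
    (hl : ∀ k t, 0 < t → volume {x | t < W k x} = volume {x | t < u x}) :
    ∀ t, 0 < t → volume {x | t < w x} = volume {x | t < u x} := by
  intro t ht
  apply le_antisymm
  · by_contra! hc
    obtain ⟨s, hs, hs'⟩ := level_cont hc
    obtain ⟨k, hk⟩ := (h (s - t) (by linarith)).exists
    rw [← hl k t ht] at hs'
    refine absurd hs' (not_lt.2 (measure_mono fun x hx => ?_))
    simp only [mem_ofPred_eq] at *
    have := abs_lt.1 (hk x); linarith
  · by_contra! hc
    obtain ⟨s, hs, hs'⟩ := level_cont hc
    obtain ⟨k, hk⟩ := (h (s - t) (by linarith)).exists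
    rw [← hl k s (by linarith)] at hs'
    refine absurd hs' (not_lt.2 (measure_mono fun x hx => ?_))
    simp only [mem_ofPred_eq] at *
    have := abs_lt.1 (hk x); linarith

lemma exists_Cl {u : V n → ℝ} (hc : Continuous u) (h0 : ∀ x, 0 ≤ u x) (hs : HasCompactSupport u) :
    ∃ (M R : ℝ) (δ : ℝ → ℝ), (∀ ε, 0 < ε → 0 < δ ε) ∧ Cl M R δ u := by
  obtain ⟨M, hM⟩ := hc.bddAbove_range_of_hasCompactSupport hs
  obtain ⟨R, hR⟩ := (hs.isCompact.isBounded).subset_closedBall (0 : V n)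
  have hu := Metric.uniformContinuous_iff.1 (hs.uniformContinuous_of_continuous hc)
  have : ∀ ε : ℝ, ∃ d : ℝ, 0 < ε → 0 < d ∧ ∀ x y : V n, ‖x - y‖ < d → |u x - u y| ≤ ε := by
    intro ε
    by_cases hε : 0 < ε
    · obtain ⟨d, hd, h⟩ := hu ε hε
      refine ⟨d, fun _ => ⟨hd, fun x y hxy => ?_⟩⟩
      have := h (a := x) (b := y) (by rwa [dist_eq_norm])
      rw [Real.dist_eq] at this; exact this.le
    · exact ⟨0, fun h => absurd h hε⟩
  choose δ hδ using this
  refine ⟨M, R, δ, fun ε hε => (hδ ε hε).1, h0, fun x => hM (mem_range_self x), fun x hx => ?_,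
    fun ε hε => (hδ ε hε).2⟩
  by_contra hne
  have := hR (subset_tsupport u (Function.mem_support.2 hne))
  rw [mem_closedBall_zero_iff] at this; linarith

lemma radial_of_refl {w : V n → ℝ}
    (h : ∀ (e : V n) (s : ℝ), ‖e‖ = 1 → s < 0 → ∀ x, 0 < ell e s x → w (refl e s x) ≤ w x) :
    ∀ x y, ‖x‖ < ‖y‖ → w y ≤ w x := by
  intro x y hxy
  have hne : x ≠ y := fun h => by rw [h] at hxy; exact lt_irrefl _ hxy
  obtain ⟨e, s, he, hr, hx, ha⟩ := exists_bisector hne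
  have h0 := ha 0 (by simpa using hxy)
  rw [ell_zero] at h0
  rw [← hr]
  exact h e s he (by linarith) x hx

lemma Cl.adm {M R : ℝ} {δ : ℝ → ℝ} (hδ : ∀ ε, 0 < ε → 0 < δ ε) {w : V n → ℝ}
    (h : Cl M R δ w) : Adm w := by
  refine ⟨(h.cont hδ).measurable, h.nonneg, fun τ hτ => ?_⟩
  refine lt_of_le_of_lt (measure_mono (t := Metric.closedBall 0 R) fun x hx => ?_)
    measure_closedBall_lt_top
  rw [mem_closedBall_zero_iff]
  by_contra! hc
  have := h.supp x hc
  simp only [mem_ofPred_eq] at hx; linarith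

structure KK (J : ℝ → ℝ) (g u v : V n → ℝ) (M R M' R' : ℝ) (δ δ' : ℝ → ℝ)
    (w z : V n → ℝ) : Prop where
  c1 : Cl M R δ w
  c2 : Cl M' R' δ' z
  l1 : ∀ t, 0 < t → volume {x | t < w x} = volume {x | t < u x}
  l2 : ∀ t, 0 < t → volume {x | t < z x} = volume {x | t < v x}
  en : En J g w z ≤ En J g u v

lemma riesz_cc [NeZero n] {J : ℝ → ℝ} (hJ : JJ J) {g : V n → ℝ} (hg : Ker g) {u v : V n → ℝ}
    (huc : Continuous u) (hu0 : ∀ x, 0 ≤ u x) (hus : HasCompactSupport u)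
    (hvc : Continuous v) (hv0 : ∀ x, 0 ≤ v x) (hvs : HasCompactSupport v) :
    En J g (schwarzRearr n u) (schwarzRearr n v) ≤ En J g u v := by
  obtain ⟨M, R, δ, hδ, hu⟩ := exists_Cl huc hu0 hus
  obtain ⟨M', R', δ', hδ', hv⟩ := exists_Cl hvc hv0 hvs
  let S : Set ℝ := {m | ∃ w z : V n → ℝ, KK J g u v M R M' R' δ δ' w z ∧ m = Mo w + Mo z}
  have hSne : S.Nonempty := ⟨_, u, v, ⟨hu, hv, fun _ _ => rfl, fun _ _ => rfl, le_rfl⟩, rfl⟩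
  have hMo : ∀ {M R : ℝ} {δ : ℝ → ℝ} {w : V n → ℝ}, Cl M R δ w → 0 ≤ Mo w := fun h =>
    integral_nonneg fun x => mul_nonneg (by positivity) (h.nonneg x)
  have hSb : BddBelow S := ⟨0, by
    rintro m ⟨w, z, h, rfl⟩; exact add_nonneg (hMo h.c1) (hMo h.c2)⟩
  obtain ⟨m, -, hm, hmS⟩ := exists_seq_tendsto_sInf hSne hSb
  choose w z hK hmk using hmS
  let W : ℕ → C(V n, ℝ) := fun k => ⟨w k, (hK k).c1.cont hδ⟩
  let Z : ℕ → C(V n, ℝ) := fun k => ⟨z k, (hK k).c2.cont hδ'⟩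
  obtain ⟨⟨w0, z0⟩, ⟨hw0, hz0⟩, φ, hφ, hlim⟩ :=
    ((Cl_compact (n := n) M R hδ).prod (Cl_compact (n := n) M' R' hδ')).isSeqCompact
      (x := fun k => (W k, Z k)) (fun k => ⟨(hK k).c1, (hK k).c2⟩)
  have hw0 : Cl M R δ w0 := hw0
  have hz0 : Cl M' R' δ' z0 := hz0
  rw [Prod.tendsto_iff] at hlim
  have u1 := Cl_unif (W := fun k => W (φ k)) (fun k => (hK (φ k)).c1) hw0 hlim.1
  have u2 := Cl_unif (W := fun k => Z (φ k)) (fun k => (hK (φ k)).c2) hz0 hlim.2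
  have pw : ∀ (A : ℕ → V n → ℝ) (a : V n → ℝ),
      (∀ ε, 0 < ε → ∀ᶠ k in atTop, ∀ x, |A k x - a x| < ε) →
      ∀ x, Tendsto (fun k => A k x) atTop (𝓝 (a x)) := by
    intro A a h x
    rw [Metric.tendsto_nhds]
    intro ε hε
    filter_upwards [h ε hε] with k hk
    rw [Real.dist_eq]; exact hk x
  have p1 := pw (fun k => w (φ k)) w0 u1
  have p2 := pw (fun k => z (φ k)) z0 u2
  have K0 : KK J g u v M R M' R' δ δ' w0 z0 := by
    refine ⟨hw0, hz0, level_lim (W := fun k => w (φ k)) u1 (fun k => (hK _).l1),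
      level_lim (W := fun k => z (φ k)) u2 (fun k => (hK _).l2), ?_⟩
    exact En_fatou hJ hg (U := fun k => w (φ k)) (W := fun k => z (φ k))
      (fun k => ((hK _).c1.cont hδ).measurable) (fun k => ((hK _).c2.cont hδ').measurable)
      (Eventually.of_forall p1) (Eventually.of_forall p2) (fun k => (hK _).en)
  have m0 : Mo w0 + Mo z0 = sInf S := by
    have t1 := (Mo_tendsto hδ (fun k => (hK (φ k)).c1) p1).add
      (Mo_tendsto hδ' (fun k => (hK (φ k)).c2) p2)
    have t2 := hm.comp hφ.tendsto_atTop
    refine tendsto_nhds_unique t1 (t2.congr fun k => ?_)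
    exact hmk (φ k)
  have minim : ∀ (e : V n) (s : ℝ), ‖e‖ = 1 → s < 0 →
      (∀ x, 0 < ell e s x → w0 (refl e s x) ≤ w0 x) ∧
      (∀ x, 0 < ell e s x → z0 (refl e s x) ≤ z0 x) := by
    intro e s he hs
    have Kp : KK J g u v M R M' R' δ δ' (pol e s w0) (pol e s z0) := by
      refine ⟨hw0.pol he hs.le, hz0.pol he hs.le, fun t ht => ?_, fun t ht => ?_, ?_⟩
      · rw [vol_pol he s w0.continuous.measurable, K0.l1 t ht]
      · rw [vol_pol he s z0.continuous.measurable, K0.l2 t ht]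
      · exact (En_pol_le hJ hg he s w0.continuous.measurable z0.continuous.measurable).trans K0.en
    have hle : sInf S ≤ Mo (pol e s w0) + Mo (pol e s z0) := csInf_le hSb ⟨_, _, Kp, rfl⟩
    obtain ⟨a1, a2⟩ := Mo_pol hδ hw0 he hs
    obtain ⟨b1, b2⟩ := Mo_pol hδ' hz0 he hs
    exact ⟨a2 (by linarith), b2 (by linarith)⟩
  have r1 := radial_of_refl fun e s he hs => (minim e s he hs).1
  have r2 := radial_of_refl fun e s he hs => (minim e s he hs).2
  have e1 : schwarzRearr n u =ᵐ[volume] w0 := by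
    filter_upwards [ae_ne_zero] with x hx
    exact star_of_radial (hu.adm hδ) w0.continuous hw0.nonneg r1 K0.l1 hx
  have e2 : schwarzRearr n v =ᵐ[volume] z0 := by
    filter_upwards [ae_ne_zero] with x hx
    exact star_of_radial (hv.adm hδ') z0.continuous hz0.nonneg r2 K0.l2 hx
  rw [En_congr e1 e2]
  exact K0.en

end RR

open MeasureTheory Real
namespace RR
open Filter Topology Set
open scoped ENNReal
variable {n : ℕ}

lemma star_tendsto [NeZero n] {u : V n → ℝ} (hu : Adm u) {W : ℕ → V n → ℝ} (hW : ∀ k, Adm (W k))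
    (h : ∀ ε : ℝ, 0 < ε → Tendsto (fun k => volume {x | ε ≤ |W k x - u x|}) atTop (𝓝 0)) :
    ∀ᵐ x, Tendsto (fun k => schwarzRearr n (W k) x) atTop (𝓝 (schwarzRearr n u x)) := by
  have h1 : ∀ᵐ x : V n, ∀ q : ℚ, 0 < (q : ℝ) →
      volume (Metric.ball (0 : V n) ‖x‖) ≠ volume {y | (q : ℝ) < u y} := by
    rw [ae_all_iff]
    intro q
    by_cases hq : 0 < (q : ℝ)
    · have : ∀ᵐ x : V n, x ∉ Metric.sphere (0 : V n) (schwarzRadius n {y | (q : ℝ) < u y}) := by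
        rw [ae_iff]; simp only [not_not]
        exact Measure.addHaar_sphere _ _ _
      filter_upwards [this] with x hx _ heq
      apply hx
      rw [mem_sphere_zero_iff_norm]
      have hf := (hu.fin q hq).ne
      rw [← vol_ball_radius 0 hf] at heq
      apply le_antisymm
      · by_contra! hc
        exact absurd heq (vol_ball_lt 0 0 (radius_nonneg _) hc).ne'
      · by_contra! hc
        exact absurd heq (vol_ball_lt 0 0 (norm_nonneg _) hc).ne
    · exact Eventually.of_forall fun x h => absurd h hq
  filter_upwards [h1, ae_ne_zero] with x hx hx0
  have hball : volume (Metric.ball (0 : V n) ‖x‖) ≠ ⊤ := measure_ball_lt_top.ne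
  have key : ∀ c d : ℝ≥0∞, c ≠ ⊤ → c < d → ∀ ε : ℝ, 0 < ε → ∀ᶠ k in atTop,
      c + volume {x | ε ≤ |W k x - u x|} < d := by
    intro c d hc hcd ε hε
    have := (h ε hε).const_add c
    rw [add_zero] at this
    exact this.eventually_lt_const hcd
  rw [tendsto_order]
  constructor
  · intro a ha
    rcases lt_or_ge a 0 with h0 | h0
    · exact Eventually.of_forall fun k => h0.trans_le (star_nonneg _ _)
    obtain ⟨t, hat, ht⟩ := exists_between ha
    obtain ⟨s, hts, hs⟩ := exists_between ht
    rw [star_lt hu hx0 (by linarith)] at hs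
    filter_upwards [key _ _ hball hs (s - t) (by linarith)] with k hk
    refine hat.trans ((star_lt (hW k) hx0 (by linarith)).2 ?_)
    by_contra! hc
    refine absurd hk (not_lt.2 ?_)
    calc volume {y | s < u y} ≤ volume ({y | t < W k y} ∪ {x | s - t ≤ |W k x - u x|}) := by
          apply measure_mono
          intro y hy
          simp only [mem_ofPred_eq, mem_union] at *
          by_cases h3 : t < W k y
          · exact Or.inl h3
          · right; rw [abs_sub_comm]; exact le_trans (by linarith) (le_abs_self _)
      _ ≤ _ := (measure_union_le _ _).trans (by gcongr)
  · intro b hb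
    obtain ⟨q, hq1, hq2⟩ := exists_rat_btwn hb
    obtain ⟨t, hqt, htb⟩ := exists_between hq2
    have hq0 : 0 < (q : ℝ) := (star_nonneg u x).trans_lt hq1
    have hlt : volume {y | (q : ℝ) < u y} < volume (Metric.ball (0 : V n) ‖x‖) := by
      apply lt_of_le_of_ne _ (hx q hq0).symm
      rw [← not_lt, ← star_lt hu hx0 hq0]; linarith
    filter_upwards [key _ _ (hu.fin q hq0).ne hlt (t - q) (by linarith)] with k hk
    refine lt_of_le_of_lt ?_ htb
    rw [← not_lt, star_lt (hW k) hx0 (by linarith)]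
    intro h4
    refine absurd (hk.trans h4) (not_lt.2 ?_)
    calc volume {y | t < W k y} ≤ volume ({y | q < u y} ∪ {x | t - q ≤ |W k x - u x|}) := by
          apply measure_mono
          intro y hy
          simp only [mem_ofPred_eq, mem_union] at *
          by_cases h3 : q < u y
          · exact Or.inl h3
          · right; exact le_trans (by linarith) (le_abs_self _)
      _ ≤ _ := measure_union_le _ _

lemma J_between {J : ℝ → ℝ} (hJ : JJ J) {p q : ℝ} (h : (0 ≤ p ∧ p ≤ q) ∨ (q ≤ p ∧ p ≤ 0)) :
    J p ≤ J q := by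
  have hm : max (J 0) (J q) = J q := by rw [hJ.zero]; exact max_eq_right (hJ.nonneg q)
  rcases h with h | h
  · exact (hJ.conv.convexOn.le_max_of_mem_Icc (mem_univ 0) (mem_univ q) h).trans hm.le
  · have := hJ.conv.convexOn.le_max_of_mem_Icc (mem_univ q) (mem_univ 0) h
    rw [max_comm] at this
    exact this.trans hm.le

lemma J_lip {J : ℝ → ℝ} (hJ : JJ J) (M : ℝ) : ∃ L : ℝ, 0 ≤ L ∧
    ∀ a b : ℝ, |a| ≤ M → |b| ≤ M → J a ≤ J b + L * |a - b| := by
  obtain ⟨K, hK⟩ := (hJ.conv.convexOn.locallyLipschitz.locallyLipschitzOn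
    (s := Icc (-M) M)).exists_lipschitzOnWith_of_compact isCompact_Icc
  refine ⟨K, K.2, fun a b ha hb => ?_⟩
  have := hK.dist_le_mul a (abs_le.1 ha) b (abs_le.1 hb)
  rw [Real.dist_eq, Real.dist_eq] at this
  have := (abs_le.1 this).2; linarith

lemma En_close {J : ℝ → ℝ} (hJ : JJ J) {g : V n → ℝ} (hg : Ker g) {M : ℝ} : ∃ L : ℝ≥0∞, L ≠ ⊤ ∧
    ∀ u v w z : V n → ℝ, Measurable u → Measurable v → Measurable w → Measurable z →
    (∀ x, 0 ≤ u x ∧ u x ≤ M) → (∀ x, 0 ≤ v x ∧ v x ≤ M) →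
    (∀ x, 0 ≤ w x ∧ w x ≤ M) → (∀ x, 0 ≤ z x ∧ z x ≤ M) →
    En J g w z ≤ En J g u v + L * (∫⁻ x, ENNReal.ofReal |w x - u x|) +
      L * (∫⁻ x, ENNReal.ofReal |z x - v x|) := by
  obtain ⟨L, hL, hl⟩ := J_lip hJ M
  refine ⟨ENNReal.ofReal L * ∫⁻ x, ENNReal.ofReal (g x), ?_, ?_⟩
  · exact ENNReal.mul_ne_top ENNReal.ofReal_ne_top hg.int.lintegral_lt_top.ne
  intro u v w z hum hvm hwm hzm hu hv hw hz
  have hgm := hg.meas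
  have hJm := hJ.cont.measurable
  set G := ∫⁻ x, ENNReal.ofReal (g x) with hG
  have pt : ∀ x y, ENNReal.ofReal (J (w x - z y) * g (x - y)) ≤
      ENNReal.ofReal (J (u x - v y) * g (x - y)) +
      (ENNReal.ofReal L * ENNReal.ofReal |w x - u x| * ENNReal.ofReal (g (x - y)) +
      ENNReal.ofReal L * ENNReal.ofReal |z y - v y| * ENNReal.ofReal (g (x - y))) := by
    intro x y
    rw [← ENNReal.ofReal_mul hL, ← ENNReal.ofReal_mul hL, ← ENNReal.ofReal_mul (by positivity),
      ← ENNReal.ofReal_mul (by positivity)]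
    have g0 := hg.nonneg (x - y)
    have j0 := hJ.nonneg (u x - v y)
    rw [← ENNReal.ofReal_add (by positivity) (by positivity),
      ← ENNReal.ofReal_add (by positivity) (by positivity)]
    apply ENNReal.ofReal_le_ofReal
    have h1 := hl (w x - z y) (u x - v y)
      (abs_le.2 ⟨by linarith [hw x, hz y], by linarith [hw x, hz y]⟩)
      (abs_le.2 ⟨by linarith [hu x, hv y], by linarith [hu x, hv y]⟩)
    have h2 : |w x - z y - (u x - v y)| ≤ |w x - u x| + |z y - v y| := by
      rw [show w x - z y - (u x - v y) = (w x - u x) - (z y - v y) by ring]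
      exact abs_sub _ _
    have h3 : J (w x - z y) ≤ J (u x - v y) + (L * |w x - u x| + L * |z y - v y|) := by
      nlinarith
    calc _ ≤ (J (u x - v y) + (L * |w x - u x| + L * |z y - v y|)) * g (x - y) := by gcongr
      _ = _ := by ring
  have i1 : ∫⁻ x, ∫⁻ y, ENNReal.ofReal L * ENNReal.ofReal |w x - u x| * ENNReal.ofReal (g (x - y))
      = ENNReal.ofReal L * G * ∫⁻ x, ENNReal.ofReal |w x - u x| := by
    rw [← lintegral_const_mul _ (by fun_prop)]
    apply lintegral_congr
    intro x
    rw [lintegral_const_mul _ (by fun_prop),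
      lintegral_sub_left_eq_self (fun z => ENNReal.ofReal (g z)) x]
    ring
  have i2 : ∫⁻ x, ∫⁻ y, ENNReal.ofReal L * ENNReal.ofReal |z y - v y| * ENNReal.ofReal (g (x - y))
      = ENNReal.ofReal L * G * ∫⁻ x, ENNReal.ofReal |z x - v x| := by
    rw [lintegral_lintegral_swap (by fun_prop)]
    rw [← lintegral_const_mul _ (by fun_prop)]
    apply lintegral_congr
    intro x
    rw [lintegral_const_mul _ (by fun_prop),
      lintegral_sub_right_eq_self (fun z => ENNReal.ofReal (g z)) x]
    ring
  rw [← i1, ← i2]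
  unfold En
  calc _ ≤ ∫⁻ x, ∫⁻ y, (ENNReal.ofReal (J (u x - v y) * g (x - y)) +
      (ENNReal.ofReal L * ENNReal.ofReal |w x - u x| * ENNReal.ofReal (g (x - y)) +
      ENNReal.ofReal L * ENNReal.ofReal |z y - v y| * ENNReal.ofReal (g (x - y)))) :=
        lintegral_mono fun x => lintegral_mono fun y => pt x y
    _ = _ := by
      rw [add_assoc, ← lintegral_add_left (by fun_prop), ← lintegral_add_left (by fun_prop)]
      apply lintegral_congr
      intro x
      rw [← lintegral_add_left (by fun_prop), ← lintegral_add_left (by fun_prop)]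

lemma approx_cc {u : V n → ℝ} {M : ℝ} (hu : ∀ x, 0 ≤ u x ∧ u x ≤ M) (hi : Integrable u)
    {ε : ℝ≥0∞} (hε : ε ≠ 0) : ∃ w : V n → ℝ, Continuous w ∧ HasCompactSupport w ∧
      (∀ x, 0 ≤ w x ∧ w x ≤ M) ∧ ∫⁻ x, ENNReal.ofReal |w x - u x| ≤ ε := by
  obtain ⟨w, hws, hw, hwc, -⟩ := hi.exists_hasCompactSupport_lintegral_sub_le hε
  have hM : 0 ≤ M := (hu 0).1.trans (hu 0).2
  refine ⟨fun x => max 0 (min (w x) M), by fun_prop, ?_, fun x => ⟨le_max_left _ _, ?_⟩, ?_⟩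
  · exact hws.comp_left (g := fun t => max 0 (min t M)) (by simp [hM])
  · exact max_le hM (min_le_right _ _)
  · refine le_trans (lintegral_mono fun x => ?_) hw
    rw [← ofReal_norm, norm_eq_abs, abs_sub_comm (u x)]
    apply ENNReal.ofReal_le_ofReal
    have := hu x
    rw [abs_le]
    beta_reduce
    rcases le_total (w x) M with h | h
    · rw [min_eq_left h]
      rcases le_total 0 (w x) with h' | h'
      · rw [max_eq_right h']; exact abs_le.1 le_rfl
      · rw [max_eq_left h', abs_of_nonpos (by linarith)]; constructor <;> linarith
    · rw [min_eq_right h, max_eq_right hM, abs_of_nonneg (by linarith)]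
      constructor <;> linarith

lemma riesz_bdd [NeZero n] {J : ℝ → ℝ} (hJ : JJ J) {g : V n → ℝ} (hg : Ker g) {u v : V n → ℝ}
    {M : ℝ} (hu : Adm u) (hv : Adm v) (hu1 : ∀ x, u x ≤ M) (hv1 : ∀ x, v x ≤ M)
    (hui : Integrable u) (hvi : Integrable v) :
    En J g (schwarzRearr n u) (schwarzRearr n v) ≤ En J g u v := by
  obtain ⟨L, hL, hl⟩ := En_close hJ hg (M := M)
  apply ENNReal.le_of_forall_pos_le_add
  intro ε hε _
  -- choice of the small quantity
  obtain ⟨η, hη0, hηt, hη⟩ : ∃ η : ℝ≥0∞, η ≠ 0 ∧ η ≠ ⊤ ∧ L * η + L * η ≤ ε := by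
    refine ⟨(ε : ℝ≥0∞) / (2 * L + 1), ?_, ?_, ?_⟩
    · apply (ENNReal.div_pos (by simpa using hε.ne') _).ne'
      exact ENNReal.add_ne_top.2 ⟨ENNReal.mul_ne_top (by simp) hL, by simp⟩
    · exact ENNReal.div_ne_top (by simp) (by simp)
    · rw [← two_mul, ← mul_assoc, ← mul_div_assoc]
      apply ENNReal.div_le_of_le_mul
      rw [mul_comm]
      gcongr
      exact le_self_add
  have hA := fun k : ℕ => approx_cc (fun x => ⟨hu.nonneg x, hu1 x⟩) hui
    (ε := η / (k + 1)) (ENNReal.div_pos hη0 (by finiteness)).ne'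
  have hB := fun k : ℕ => approx_cc (fun x => ⟨hv.nonneg x, hv1 x⟩) hvi
    (ε := η / (k + 1)) (ENNReal.div_pos hη0 (by finiteness)).ne'
  choose w hwc hws hwb hwi using hA
  choose z hzc hzs hzb hzi using hB
  have cc_adm : ∀ w : V n → ℝ, Continuous w → HasCompactSupport w → (∀ x, 0 ≤ w x) → Adm w := by
    intro w h1 h2 h3
    obtain ⟨_, _, _, hd, h⟩ := exists_Cl h1 h3 h2
    exact h.adm hd
  have wadm := fun k => cc_adm _ (hwc k) (hws k) (fun x => (hwb k x).1)
  have zadm := fun k => cc_adm _ (hzc k) (hzs k) (fun x => (hzb k x).1)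
  have hle : ∀ k : ℕ, η / (k + 1) ≤ η := fun k =>
    ENNReal.div_le_of_le_mul (by
      calc η = η * 1 := (mul_one _).symm
        _ ≤ η * (k + 1) := by gcongr; exact le_add_self)
  have hlim : Tendsto (fun k : ℕ => η / ((k : ℝ≥0∞) + 1)) atTop (𝓝 0) := by
    have h1 : Tendsto (fun k : ℕ => ((k : ℝ≥0∞) + 1)) atTop (𝓝 ⊤) := by
      have := (tendsto_add_atTop_iff_nat 1).2 ENNReal.tendsto_nat_nhds_top
      simpa using this
    have := ENNReal.Tendsto.const_div h1 (a := η) (Or.inr hηt)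
    simpa using this
  have conv : ∀ (W : ℕ → V n → ℝ) (a : V n → ℝ), (∀ k, Measurable (W k)) → Measurable a →
      (∀ k : ℕ, ∫⁻ x, ENNReal.ofReal |W k x - a x| ≤ η / (k + 1)) →
      ∀ ε : ℝ, 0 < ε → Tendsto (fun k => volume {x | ε ≤ |W k x - a x|}) atTop (𝓝 0) := by
    intro W a hWm ham hi ε hε
    have hε' : ENNReal.ofReal ε ≠ 0 := by simpa using hε
    have h2 : Tendsto (fun k : ℕ => η / ((k : ℝ≥0∞) + 1) / ENNReal.ofReal ε) atTop (𝓝 0) := by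
      have := ENNReal.Tendsto.div_const hlim (b := ENNReal.ofReal ε) (Or.inr hε')
      simpa using this
    refine tendsto_of_tendsto_of_tendsto_of_le_of_le tendsto_const_nhds h2 (fun _ => zero_le)
      fun k => ?_
    have hm := meas_ge_le_lintegral_div (μ := (volume : Measure (V n)))
      (f := fun x => ENNReal.ofReal |W k x - a x|)
      (by have := hWm k; fun_prop) hε' ENNReal.ofReal_ne_top
    refine le_trans (measure_mono fun x hx => ?_) (hm.trans (ENNReal.div_le_div_right (hi k) _))
    exact ENNReal.ofReal_le_ofReal hx
  refine En_fatou hJ hg (U := fun k => schwarzRearr n (w k)) (W := fun k => schwarzRearr n (z k))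
    (fun k => star_meas (wadm k)) (fun k => star_meas (zadm k))
    (star_tendsto hu wadm (conv w u (fun k => (wadm k).meas) hu.meas hwi))
    (star_tendsto hv zadm (conv z v (fun k => (zadm k).meas) hv.meas hzi)) fun k => ?_
  calc _ ≤ En J g (w k) (z k) := riesz_cc hJ hg (hwc k) (fun x => (hwb k x).1) (hws k)
        (hzc k) (fun x => (hzb k x).1) (hzs k)
    _ ≤ En J g u v + L * (∫⁻ x, ENNReal.ofReal |w k x - u x|) +
      L * (∫⁻ x, ENNReal.ofReal |z k x - v x|) := hl u v (w k) (z k) hu.meas hv.meas (wadm k).meas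
        (zadm k).meas (fun x => ⟨hu.nonneg x, hu1 x⟩) (fun x => ⟨hv.nonneg x, hv1 x⟩) (hwb k) (hzb k)
    _ ≤ En J g u v + L * η + L * η := by
        gcongr
        · exact (hwi k).trans (hle k)
        · exact (hzi k).trans (hle k)
    _ ≤ En J g u v + ε := by rw [add_assoc]; gcongr

/-- truncation -/
noncomputable def Tr (k : ℕ) (s : ℝ) : ℝ := min (max (s - 1 / ((k : ℝ) + 1)) 0) ((k : ℝ) + 1)

lemma Tr_lt (k : ℕ) {s t : ℝ} (ht : 0 ≤ t) :
    t < Tr k s ↔ t < (k : ℝ) + 1 ∧ t + 1 / ((k : ℝ) + 1) < s := by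
  unfold Tr
  rw [lt_min_iff, lt_max_iff]
  constructor
  · rintro ⟨h | h, h'⟩
    · exact ⟨h', by linarith⟩
    · linarith
  · rintro ⟨h, h'⟩
    exact ⟨Or.inl (by linarith), h⟩

lemma Tr_nonneg (k : ℕ) (s : ℝ) : 0 ≤ Tr k s := le_min (le_max_right _ _) (by positivity)

lemma Tr_le (k : ℕ) (s : ℝ) : Tr k s ≤ (k : ℝ) + 1 := min_le_right _ _

lemma Tr_cont (k : ℕ) : Continuous (Tr k) := by unfold Tr; fun_prop

lemma Tr_mono (k : ℕ) : Monotone (Tr k) := by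
  intro a b h; unfold Tr; gcongr

lemma Tr_lip (k : ℕ) {a b : ℝ} (h : a ≤ b) : Tr k b - Tr k a ≤ b - a := by
  unfold Tr
  set c := 1 / ((k : ℝ) + 1)
  have : (0 : ℝ) < (k : ℝ) + 1 := by positivity
  rcases max_cases (b - c) 0 with ⟨p, p'⟩ | ⟨p, p'⟩ <;>
  rcases max_cases (a - c) 0 with ⟨q, q'⟩ | ⟨q, q'⟩ <;> rw [p, q] <;>
  simp only [min_def] <;> split_ifs <;> linarith

lemma Tr_tendsto {s : ℝ} (hs : 0 ≤ s) : Tendsto (fun k => Tr k s) atTop (𝓝 s) := by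
  have h1 : Tendsto (fun k : ℕ => max (s - 1 / ((k : ℝ) + 1)) 0) atTop (𝓝 s) := by
    have := (tendsto_const_nhds (x := s)).sub (tendsto_one_div_add_atTop_nhds_zero_nat (𝕜 := ℝ))
    have := this.max (tendsto_const_nhds (x := (0 : ℝ)))
    simpa [hs] using this
  refine h1.congr' ?_
  obtain ⟨N, hN⟩ := exists_nat_ge s
  filter_upwards [eventually_ge_atTop N] with k hk
  unfold Tr
  rw [min_eq_left]
  have : (N : ℝ) ≤ k := by exact_mod_cast hk
  have h3 : 0 < 1 / ((k : ℝ) + 1) := by positivity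
  exact max_le (by linarith) (by positivity)

lemma Tr_adm (k : ℕ) {u : V n → ℝ} (hu : Adm u) : Adm (fun x => Tr k (u x)) := by
  refine ⟨(Tr_cont k).measurable.comp hu.meas, fun x => Tr_nonneg _ _, fun t ht => ?_⟩
  refine lt_of_le_of_lt (measure_mono fun x hx => ?_)
    (hu.fin (t + 1 / ((k : ℝ) + 1)) (by positivity))
  exact ((Tr_lt k ht.le).1 hx).2

lemma Tr_int (k : ℕ) {u : V n → ℝ} (hu : Adm u) : Integrable (fun x => Tr k (u x)) := by
  have hm := measurableSet_lt measurable_const hu.meas (f := fun _ => 1 / ((k : ℝ) + 1))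
  have hi : Integrable ({x | 1 / ((k : ℝ) + 1) < u x}.indicator fun _ => (k : ℝ) + 1) := by
    rw [integrable_indicator_iff hm]
    exact integrableOn_const (hu.fin _ (by positivity)).ne
  refine hi.mono' (Tr_adm k hu).meas.aestronglyMeasurable (Eventually.of_forall fun x => ?_)
  rw [norm_eq_abs, abs_of_nonneg (Tr_nonneg _ _)]
  by_cases h : 0 < Tr k (u x)
  · have := ((Tr_lt k le_rfl).1 h).2
    rw [zero_add] at this
    rw [indicator_of_mem (by exact this)]
    exact Tr_le _ _
  · exact (not_lt.1 h).trans (indicator_nonneg (fun _ _ => by positivity) _)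

lemma Tr_star [NeZero n] (k : ℕ) {u : V n → ℝ} (hu : Adm u) {x : V n} (hx : x ≠ 0) :
    schwarzRearr n (fun x => Tr k (u x)) x = Tr k (schwarzRearr n u x) := by
  apply eq_of_pos_lt (star_nonneg _ _) (Tr_nonneg _ _)
  intro t ht
  rw [star_lt (Tr_adm k hu) hx ht, Tr_lt k ht.le, star_lt hu hx (by positivity)]
  simp only [Tr_lt k ht.le]
  by_cases h : t < (k : ℝ) + 1
  · simp only [h, true_and]
  · simp only [h, false_and]; simp

theorem riesz [NeZero n] {J : ℝ → ℝ} (hJ : JJ J) {g : V n → ℝ} (hg : Ker g) {u v : V n → ℝ}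
    (hu : Adm u) (hv : Adm v) :
    En J g (schwarzRearr n u) (schwarzRearr n v) ≤ En J g u v := by
  have lim : ∀ u : V n → ℝ, Adm u → ∀ᵐ x, Tendsto
      (fun k => schwarzRearr n (fun x => Tr k (u x)) x) atTop (𝓝 (schwarzRearr n u x)) := by
    intro u hu
    filter_upwards [ae_ne_zero] with x hx
    refine (Tr_tendsto (star_nonneg u x)).congr fun k => ?_
    rw [Tr_star k hu hx]
  refine En_fatou hJ hg (fun k => star_meas (Tr_adm k hu)) (fun k => star_meas (Tr_adm k hv))
    (lim u hu) (lim v hv) fun k => ?_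
  refine (riesz_bdd hJ hg (Tr_adm k hu) (Tr_adm k hv) (fun x => Tr_le _ _) (fun x => Tr_le _ _)
    (Tr_int k hu) (Tr_int k hv)).trans ?_
  unfold En
  refine lintegral_mono fun x => lintegral_mono fun y => ENNReal.ofReal_le_ofReal ?_
  refine mul_le_mul_of_nonneg_right (J_between hJ ?_) (hg.nonneg _)
  rcases le_total (u x) (v y) with h | h
  · right
    have := Tr_lip k h
    have := Tr_mono k h
    constructor <;> linarith
  · left
    have := Tr_lip k h
    have := Tr_mono k h
    constructor <;> linarith

end RR

open MeasureTheory Real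
namespace RR
open Filter Topology Set
open scoped ENNReal
variable {n : ℕ}

/-- the set is (a.e.) polarized towards the positive side -/
def Pl (e : V n) (s : ℝ) (A : Set (V n)) : Prop :=
  volume {x | ell e s x < 0 ∧ x ∈ A ∧ refl e s x ∉ A} = 0

/-- the set is (a.e.) polarized towards the negative side -/
def An (e : V n) (s : ℝ) (A : Set (V n)) : Prop :=
  volume {x | 0 < ell e s x ∧ x ∈ A ∧ refl e s x ∉ A} = 0

/-- the compatibility condition -/
def CC (A B : Set (V n)) : Prop :=
  ∀ (e : V n) (s : ℝ), ‖e‖ = 1 → (An e s A ∨ Pl e s B) ∧ (Pl e s A ∨ An e s B)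

lemma CC.symm {A B : Set (V n)} (h : CC A B) : CC B A := fun e s he =>
  ⟨(h e s he).2.symm, (h e s he).1.symm⟩

lemma ell_neg (e : V n) (s : ℝ) (x : V n) : ell (-e) (-s) x = - ell e s x := by
  unfold ell; rw [inner_neg_left]; ring

lemma refl_neg (e : V n) (s : ℝ) (x : V n) : refl (-e) (-s) x = refl e s x := by
  unfold refl; rw [ell_neg]; module

lemma An_iff (e : V n) (s : ℝ) (A : Set (V n)) : An e s A ↔ Pl (-e) (-s) A := by
  unfold An Pl; simp only [ell_neg, refl_neg, neg_lt_zero]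

lemma Pl_iff (e : V n) (s : ℝ) (A : Set (V n)) : Pl e s A ↔ An (-e) (-s) A := by
  unfold An Pl; simp only [ell_neg, refl_neg, neg_pos]

/-- potential of a set -/
noncomputable def FK (K : ℝ → ℝ) (A : Set (V n)) (x : V n) : ℝ := ∫ y in A, K ‖x - y‖

structure KerK (K : ℝ → ℝ) : Prop where
  meas : Measurable K
  bdd : ∀ t, 0 ≤ t → 0 ≤ K t ∧ K t ≤ 1
  anti : ∀ a b, 0 ≤ a → a ≤ b → K b ≤ K a

lemma FK_int {K : ℝ → ℝ} (hK : KerK K) {A : Set (V n)} (hAf : volume A < ⊤) (x : V n) :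
    IntegrableOn (fun y => K ‖x - y‖) A := by
  have hm := hK.meas
  refine Integrable.mono' (g := fun _ => (1 : ℝ)) (integrableOn_const hAf.ne) ?_ ?_
  · exact (by fun_prop : Measurable fun y => K ‖x - y‖).aestronglyMeasurable
  · refine Eventually.of_forall fun y => ?_
    have := hK.bdd ‖x - y‖ (norm_nonneg _)
    rw [norm_eq_abs, abs_of_nonneg this.1]; exact this.2

lemma FK_diff {K : ℝ → ℝ} (hK : KerK K) {A : Set (V n)} (hA : MeasurableSet A)
    (hAf : volume A < ⊤) {e : V n} (he : ‖e‖ = 1) (s : ℝ) (x : V n) :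
    Integrable (fun y => (A.indicator (fun _ => (1 : ℝ)) y - A.indicator (fun _ => (1 : ℝ)) (refl e s y)) *
      (K ‖x - y‖ - K ‖refl e s x - y‖)) ∧
    2 * (FK K A x - FK K A (refl e s x)) =
      ∫ y, (A.indicator (fun _ => (1 : ℝ)) y - A.indicator (fun _ => (1 : ℝ)) (refl e s y)) *
        (K ‖x - y‖ - K ‖refl e s x - y‖) := by
  set h : V n → ℝ := fun y => K ‖x - y‖ - K ‖refl e s x - y‖ with hh
  set f : V n → ℝ := fun y => A.indicator (fun _ => (1 : ℝ)) y * h y with hf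
  have hodd : ∀ y, h (refl e s y) = - h y := by
    intro y
    simp only [hh]
    rw [norm_refl_sub_refl he, ← norm_sub_refl_comm he]; ring
  have hfi : f = A.indicator h := by
    funext y
    simp only [hf]
    by_cases hy : y ∈ A <;> simp [hy]
  have i1 : Integrable f := by
    rw [hfi, integrable_indicator_iff hA]
    exact (FK_int hK hAf x).sub (FK_int hK hAf _)
  have e1 : FK K A x - FK K A (refl e s x) = ∫ y, f y := by
    unfold FK
    rw [← integral_sub (FK_int hK hAf x) (FK_int hK hAf _), hfi, integral_indicator hA]
  have i2 : Integrable (fun y => f (refl e s y)) :=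
    (mp_refl he s).integrable_comp_of_integrable i1
  have e2 : ∫ y, f (refl e s y) = ∫ y, f y := by
    have h1 := integral_map (μ := (volume : Measure (V n))) (mp_refl he s).measurable.aemeasurable
      (f := f) (by rw [(mp_refl he s).map_eq]; exact i1.aestronglyMeasurable)
    rw [(mp_refl he s).map_eq] at h1
    exact h1.symm
  have e3 : (fun y => (A.indicator (fun _ => (1 : ℝ)) y - A.indicator (fun _ => (1 : ℝ)) (refl e s y)) *
      h y) = fun y => f y + f (refl e s y) := by
    funext y
    simp only [hf]
    rw [hodd]; ring
  rw [e3]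
  exact ⟨i1.add i2, by rw [e1, integral_add i1 i2, e2]; ring⟩

lemma FK_diff_nonneg {K : ℝ → ℝ} (hK : KerK K) {A : Set (V n)}
    {e : V n} (he : ‖e‖ = 1) {s : ℝ} (hP : Pl e s A)
    {x : V n} (hx : 0 < ell e s x) :
    ∀ᵐ y, 0 ≤ (A.indicator (fun _ => (1 : ℝ)) y - A.indicator (fun _ => (1 : ℝ)) (refl e s y)) *
      (K ‖x - y‖ - K ‖refl e s x - y‖) := by
  have h1 : ∀ᵐ y, ¬ (ell e s y < 0 ∧ y ∈ A ∧ refl e s y ∉ A) := by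
    rw [ae_iff]; simp only [not_not]; exact hP
  have h2 := (mp_refl he s).quasiMeasurePreserving.ae h1
  filter_upwards [h1, h2] with y a1 a2
  rw [ell_refl he, refl_refl he] at a2
  rw [norm_sub_refl_comm he]
  by_cases y1 : y ∈ A <;> by_cases y2 : refl e s y ∈ A
  · simp [y1, y2]
  · have hy : 0 ≤ ell e s y := by
      by_contra! hc; exact a1 ⟨hc, y1, y2⟩
    have hn : ‖x - y‖ ≤ ‖x - refl e s y‖ := by
      by_contra! hc
      rw [norm_sub_gt_iff he] at hc
      nlinarith
    have := hK.anti _ _ (norm_nonneg _) hn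
    simp [y1, y2]; linarith
  · have hy : ell e s y ≤ 0 := by
      by_contra! hc; exact a2 ⟨by linarith, y2, y1⟩
    have hn : ‖x - refl e s y‖ ≤ ‖x - y‖ := by
      by_contra! hc
      rw [norm_sub_lt_iff he] at hc
      nlinarith
    have := hK.anti _ _ (norm_nonneg _) hn
    simp [y1, y2]; linarith
  · simp [y1, y2]

lemma FK_le {K : ℝ → ℝ} (hK : KerK K) {A : Set (V n)} (hA : MeasurableSet A)
    (hAf : volume A < ⊤) {e : V n} (he : ‖e‖ = 1) {s : ℝ} (hP : Pl e s A)
    {x : V n} (hx : 0 < ell e s x) : FK K A (refl e s x) ≤ FK K A x := by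
  have := integral_nonneg_of_ae (FK_diff_nonneg hK he hP hx)
  rw [← (FK_diff hK hA hAf he s x).2] at this
  linarith

lemma FK_strict {K : ℝ → ℝ} (hK : KerK K) (hKs : ∀ a b, 0 ≤ a → a < b → K b < K a)
    {A : Set (V n)} (hA : MeasurableSet A)
    (hAf : volume A < ⊤) {e : V n} (he : ‖e‖ = 1) {s : ℝ} (hP : Pl e s A)
    {x : V n} (hx : 0 < ell e s x) (hle : FK K A x ≤ FK K A (refl e s x)) : An e s A := by
  have h0 := FK_diff_nonneg hK he hP hx
  obtain ⟨hi, heq⟩ := FK_diff hK hA hAf he s x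
  have hz : ∫ y, (A.indicator (fun _ => (1 : ℝ)) y - A.indicator (fun _ => (1 : ℝ)) (refl e s y)) *
      (K ‖x - y‖ - K ‖refl e s x - y‖) = 0 :=
    le_antisymm (by rw [← heq]; linarith) (integral_nonneg_of_ae h0)
  have hae := (integral_eq_zero_iff_of_nonneg_ae h0 hi).1 hz
  unfold An
  rw [measure_eq_zero_iff_ae_notMem]
  filter_upwards [hae] with y hy hc
  obtain ⟨c1, c2, c3⟩ := hc
  have hlt : ‖x - y‖ < ‖x - refl e s y‖ := (norm_sub_lt_iff he s x y).2 (mul_pos hx c1)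
  have := hKs _ _ (norm_nonneg _) hlt
  rw [norm_sub_refl_comm he] at hy
  simp [c2, c3] at hy
  linarith

/-- the specific kernel -/
noncomputable def ph (t : ℝ) : ℝ := (1 + |t|)⁻¹

lemma ph_cont : Continuous ph := by
  unfold ph
  exact Continuous.inv₀ (by fun_prop) fun t => by positivity

lemma ph_strict (a b : ℝ) (ha : 0 ≤ a) (hab : a < b) : ph b < ph a := by
  unfold ph
  rw [abs_of_nonneg ha, abs_of_nonneg (ha.trans hab.le)]
  gcongr

lemma ph_ker : KerK ph := by
  refine ⟨ph_cont.measurable, fun t _ => ⟨by unfold ph; positivity, ?_⟩, fun a b ha hab => ?_⟩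
  · unfold ph
    exact inv_le_one_of_one_le₀ (by linarith [abs_nonneg t])
  · rcases hab.lt_or_eq with h | h
    · exact (ph_strict a b ha h).le
    · rw [h]

lemma ph_tendsto : Tendsto ph atTop (𝓝 0) := by
  unfold ph
  exact tendsto_inv_atTop_zero.comp
    (tendsto_atTop_add_const_left _ _ tendsto_abs_atTop_atTop)

/-- potential -/
noncomputable def fA (A : Set (V n)) : V n → ℝ := FK ph A

lemma fA_cont {A : Set (V n)} (hAf : volume A < ⊤) : Continuous (fA A) := by
  have hc := ph_cont
  apply continuous_of_dominated (bound := fun _ => (1 : ℝ))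
  · intro x
    exact (by fun_prop : Continuous fun y => ph ‖x - y‖).aestronglyMeasurable
  · intro x
    refine Eventually.of_forall fun y => ?_
    have := ph_ker.bdd ‖x - y‖ (norm_nonneg _)
    rw [norm_eq_abs, abs_of_nonneg this.1]; exact this.2
  · exact integrableOn_const hAf.ne
  · refine Eventually.of_forall fun y => ?_
    fun_prop

lemma fA_tendsto {A : Set (V n)} (hAf : volume A < ⊤) :
    Tendsto (fA A) (comap norm atTop) (𝓝 0) := by
  have hc := ph_cont
  have h0 : (0 : ℝ) = ∫ y in A, (0 : ℝ) := by simp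
  rw [h0]
  apply tendsto_integral_filter_of_dominated_convergence (bound := fun _ => (1 : ℝ))
  · refine Eventually.of_forall fun x => ?_
    exact (by fun_prop : Continuous fun y => ph ‖x - y‖).aestronglyMeasurable
  · refine Eventually.of_forall fun x => Eventually.of_forall fun y => ?_
    have := ph_ker.bdd ‖x - y‖ (norm_nonneg _)
    rw [norm_eq_abs, abs_of_nonneg this.1]; exact this.2
  · exact integrableOn_const hAf.ne
  · refine Eventually.of_forall fun y => ?_
    apply ph_tendsto.comp
    refine tendsto_atTop_mono (fun x => ?_)
      (tendsto_atTop_add_const_right _ (-‖y‖) (tendsto_comap (f := (norm : V n → ℝ))))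
    have := norm_sub_norm_le x y
    linarith

lemma fA_pos {A : Set (V n)} (hAf : volume A < ⊤) (hA0 : volume A ≠ 0)
    (x : V n) : 0 < fA A x := by
  unfold fA FK
  rw [integral_pos_iff_support_of_nonneg_ae]
  · have : Function.support (fun y => ph ‖x - y‖) = univ := by
      ext y
      simp only [Function.mem_support, mem_univ, iff_true]
      unfold ph; positivity
    rw [this]; simpa using pos_iff_ne_zero.2 hA0
  · exact Eventually.of_forall fun y => (ph_ker.bdd _ (norm_nonneg _)).1
  · exact FK_int ph_ker hAf x

/-- maximizer of the potential -/
def IsM (A : Set (V n)) (a : V n) : Prop := ∀ x, fA A x ≤ fA A a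

lemma exists_IsM {A : Set (V n)} (hAf : volume A < ⊤) (hA0 : volume A ≠ 0) :
    ∃ a, IsM A a := by
  apply (fA_cont hAf).exists_forall_ge' 0
  have h1 := fA_tendsto hAf
  rw [comap_norm_atTop, Metric.cobounded_eq_cocompact] at h1
  filter_upwards [h1.eventually_lt_const (fA_pos hAf hA0 0)] with x hx using hx.le

/-- symmetric case -/
def Sy (e : V n) (s : ℝ) (A : Set (V n)) : Prop := Pl e s A ∧ An e s A

lemma Sy_refl {A : Set (V n)} (hA : MeasurableSet A) (hAf : volume A < ⊤) {e : V n} (he : ‖e‖ = 1)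
    {s : ℝ} (h : Sy e s A) (x : V n) : fA A (refl e s x) = fA A x := by
  have he' : ‖-e‖ = 1 := by rwa [norm_neg]
  have h2 := (An_iff e s A).1 h.2
  have key : ∀ x, 0 < ell e s x → fA A (refl e s x) = fA A x := by
    intro x hx
    apply le_antisymm (FK_le ph_ker hA hAf he h.1 hx)
    have := FK_le ph_ker hA hAf he' h2 (x := refl e s x) (by rw [ell_neg, ell_refl he]; linarith)
    rwa [refl_neg, refl_refl he] at this
  rcases lt_trichotomy (ell e s x) 0 with h3 | h3 | h3
  · have := key (refl e s x) (by rw [ell_refl he]; linarith)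
    rw [refl_refl he] at this; exact this.symm
  · rw [refl_eq_self h3]
  · exact key x h3

lemma Sy_unique {A : Set (V n)} (hA : MeasurableSet A) (hAf : volume A < ⊤) (hA0 : volume A ≠ 0)
    {e : V n} (he : ‖e‖ = 1) {s s' : ℝ} (h : Sy e s A) (h' : Sy e s' A) : s = s' := by
  by_contra hne
  have htr : ∀ x, fA A (x + (2 * (s' - s)) • e) = fA A x := by
    intro x
    rw [← Sy_refl hA hAf he h x, ← Sy_refl hA hAf he h' (refl e s x)]
    congr 1
    have : ell e s' (refl e s x) = -ell e s x + (s - s') := by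
      have := ell_refl he s x
      unfold ell at *; linarith
    conv_rhs => rw [refl, this]
    unfold refl; module
  have hk : ∀ k : ℕ, fA A ((k : ℝ) • ((2 * (s' - s)) • e)) = fA A 0 := by
    intro k
    induction k with
    | zero => simp
    | succ k ih =>
      rw [← ih, ← htr ((k : ℝ) • ((2 * (s' - s)) • e))]
      congr 1; push_cast; module
  have hlim : Tendsto (fun k : ℕ => (k : ℝ) • ((2 * (s' - s)) • e)) atTop (comap norm atTop) := by
    rw [tendsto_comap_iff]
    have : (norm ∘ fun k : ℕ => (k : ℝ) • ((2 * (s' - s)) • e)) = fun k : ℕ => (k : ℝ) * |2 * (s' - s)| := by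
      funext k
      simp [norm_smul, he]
    rw [this]
    apply Tendsto.atTop_mul_const _ tendsto_natCast_atTop_atTop
    exact abs_pos.2 (mul_ne_zero two_ne_zero (sub_ne_zero.2 fun h => hne h.symm))
  have h1 := (fA_tendsto hAf).comp hlim
  have h2 : Tendsto (fun _ : ℕ => fA A 0) atTop (𝓝 0) := h1.congr fun k => hk k
  have := tendsto_nhds_unique h2 tendsto_const_nhds
  linarith [fA_pos hAf hA0 0]

lemma Sy_of_Pl {A : Set (V n)} (hA : MeasurableSet A) (hAf : volume A < ⊤)
    {e : V n} (he : ‖e‖ = 1) {s : ℝ} {a : V n} (ha : IsM A a) (hl : ell e s a < 0)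
    (h : Pl e s A) : Sy e s A := by
  refine ⟨h, FK_strict ph_ker ph_strict hA hAf he h (x := refl e s a)
    (by rw [ell_refl he]; linarith) ?_⟩
  rw [refl_refl he]; exact ha _

lemma Sy_of_An {A : Set (V n)} (hA : MeasurableSet A) (hAf : volume A < ⊤)
    {e : V n} (he : ‖e‖ = 1) {s : ℝ} {a : V n} (ha : IsM A a) (hl : 0 < ell e s a)
    (h : An e s A) : Sy e s A := by
  have := Sy_of_Pl hA hAf (e := -e) (s := -s) (by rwa [norm_neg]) ha (by rw [ell_neg]; linarith)
    ((An_iff e s A).1 h)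
  exact ⟨(Pl_iff e s A).2 this.2, h⟩

lemma IsM_eq {A B : Set (V n)} (hA : MeasurableSet A) (hAf : volume A < ⊤) (hA0 : volume A ≠ 0)
    (hB : MeasurableSet B) (hBf : volume B < ⊤) (hB0 : volume B ≠ 0) (hcc : CC A B)
    {a b : V n} (ha : IsM A a) (hb : IsM B b) : a = b := by
  by_contra hne
  obtain ⟨e, s, he, hr, hla, -⟩ := exists_bisector hne
  have hlb : ell e s b < 0 := by rw [← hr, ell_refl he]; linarith
  unfold ell at hla hlb
  set α := inner ℝ e a
  set β := inner ℝ e b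
  have key : ∀ s, β < s → s < α → Sy e s A ∨ Sy e s B := by
    intro s h1 h2
    rcases (hcc e s he).1 with h | h
    · left; exact Sy_of_An hA hAf he ha (by unfold ell; linarith) h
    · right; exact Sy_of_Pl hB hBf he hb (by unfold ell; linarith) h
  obtain ⟨s1, a1, b1⟩ := exists_between (show β < α by linarith)
  obtain ⟨s2, a2, b2⟩ := exists_between b1
  obtain ⟨s3, a3, b3⟩ := exists_between b2
  have UA := fun {s s' : ℝ} => Sy_unique hA hAf hA0 he (s := s) (s' := s')
  have UB := fun {s s' : ℝ} => Sy_unique hB hBf hB0 he (s := s) (s' := s')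
  rcases key s1 a1 b1 with k1 | k1 <;> rcases key s2 (by linarith) b2 with k2 | k2 <;>
  rcases key s3 (by linarith) b3 with k3 | k3
  · linarith [UA k1 k2]
  · linarith [UA k1 k2]
  · linarith [UA k1 k3]
  · linarith [UB k2 k3]
  · linarith [UA k2 k3]
  · linarith [UB k1 k3]
  · linarith [UB k1 k2]
  · linarith [UB k1 k2]

end RR

open MeasureTheory Real
namespace RR
open Filter Topology Set
open scoped ENNReal
variable {n : ℕ}

lemma Pl_of_M {A B : Set (V n)} (hB : MeasurableSet B)
    (hBf : volume B < ⊤) (hcc : CC A B) {a : V n} (ha : IsM B a) {e : V n} (he : ‖e‖ = 1)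
    {s : ℝ} (hl : 0 < ell e s a) (hP : ¬ Pl e s A) : Sy e s B := by
  rcases (hcc e s he).2 with h | h
  · exact absurd h hP
  · exact Sy_of_An hB hBf he ha hl h

/-- indicator kernel -/
noncomputable def bk (r : ℝ) (t : ℝ) : ℝ := if t ≤ r then 1 else 0

lemma bk_ker (r : ℝ) : KerK (bk r) := by
  refine ⟨Measurable.ite measurableSet_Iic measurable_const measurable_const, fun t _ => ?_,
    fun a b _ hab => ?_⟩
  · unfold bk; split_ifs <;> norm_num
  · unfold bk; split_ifs <;> linarith

lemma FK_bk {A : Set (V n)} (r : ℝ) (x : V n) :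
    FK (bk r) A x = (volume (A ∩ Metric.closedBall x r)).toReal := by
  unfold FK
  have : (fun y => bk r ‖x - y‖) = (Metric.closedBall x r).indicator (fun _ => (1 : ℝ)) := by
    funext y
    unfold bk
    by_cases h : ‖x - y‖ ≤ r
    · rw [if_pos h, indicator_of_mem]
      rwa [Metric.mem_closedBall, dist_comm, dist_eq_norm]
    · rw [if_neg h, indicator_of_notMem]
      rwa [Metric.mem_closedBall, dist_comm, dist_eq_norm]
  rw [this, integral_indicator measurableSet_closedBall]
  simp [Measure.real, Measure.restrict_apply measurableSet_closedBall, inter_comm]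

lemma vol_le_of_M {A B : Set (V n)} (hA : MeasurableSet A) (hAf : volume A < ⊤)
    (hB : MeasurableSet B) (hBf : volume B < ⊤) (hB0 : volume B ≠ 0)
    (hcc : CC A B) {a : V n} (ha : IsM B a) {x y : V n} (hxy : ‖x - a‖ < ‖y - a‖) (r : ℝ) :
    volume (A ∩ Metric.closedBall y r) ≤ volume (A ∩ Metric.closedBall x r) := by
  have hne : x ≠ y := fun h => by rw [h] at hxy; exact lt_irrefl _ hxy
  obtain ⟨e, s, he, hr, hlx, hla⟩ := exists_bisector hne
  have hla := hla a hxy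
  -- the enlarged inequality
  have key : ∀ η : ℝ, r < η →
      volume (A ∩ Metric.closedBall y r) ≤ volume (A ∩ Metric.closedBall x η) := by
    intro η hη
    have hc : Tendsto (fun σ => refl e σ x) (𝓝 s) (𝓝 y) := by
      have h1 : Continuous fun σ : ℝ => refl e σ x :=
        (continuous_refl e).comp (continuous_id.prodMk continuous_const)
      have := h1.tendsto s
      rwa [hr] at this
    have hev1 : ∀ᶠ σ in 𝓝 s, dist (refl e σ x) y < η - r :=
      (Metric.tendsto_nhds.1 hc) _ (by linarith)
    have hcl : ∀ z, Tendsto (fun σ => ell e σ z) (𝓝 s) (𝓝 (ell e s z)) := by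
      intro z
      have h1 : Continuous fun σ : ℝ => ell e σ z :=
        (continuous_ell e).comp (continuous_id.prodMk continuous_const)
      exact h1.tendsto s
    have hev2 := (hcl x).eventually_const_lt hlx
    have hev3 := (hcl a).eventually_const_lt hla
    obtain ⟨δ, hδ, hball⟩ := Metric.eventually_nhds_iff.1 (hev1.and (hev2.and hev3))
    have main : ∀ σ, dist σ s < δ → Pl e σ A →
        volume (A ∩ Metric.closedBall y r) ≤ volume (A ∩ Metric.closedBall x η) := by
      intro σ hσ hP
      obtain ⟨h1, h2, h3⟩ := hball hσ
      have h4 := FK_le (bk_ker η) hA hAf he hP h2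
      rw [FK_bk, FK_bk] at h4
      have fin : ∀ z, volume (A ∩ Metric.closedBall z η) ≠ ⊤ := fun z =>
        (measure_mono inter_subset_left |>.trans_lt hAf).ne
      rw [ENNReal.toReal_le_toReal (fin _) (fin _)] at h4
      refine le_trans (measure_mono (inter_subset_inter_right _ ?_)) h4
      apply Metric.closedBall_subset_closedBall'
      rw [dist_comm]; linarith
    by_cases p1 : Pl e s A
    · exact main s (by simpa using hδ) p1
    · have p2 : Pl e (s + δ / 2) A := by
        by_contra hn
        have hd : dist (s + δ / 2) s < δ := by
          rw [Real.dist_eq, add_sub_cancel_left, abs_of_pos (by linarith)]; linarith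
        have := Sy_unique hB hBf hB0 he (Pl_of_M hB hBf hcc ha he hla p1)
          (Pl_of_M hB hBf hcc ha he (hball hd).2.2 hn)
        linarith
      refine main _ ?_ p2
      rw [Real.dist_eq, add_sub_cancel_left, abs_of_pos (by linarith)]; linarith
  have lim := tendsto_measure_biInter_gt (μ := (volume : Measure (V n)))
    (s := fun η => A ∩ Metric.closedBall x η) (a := r)
    (fun η _ => (hA.inter measurableSet_closedBall).nullMeasurableSet)
    (fun i j _ hij => inter_subset_inter_right _ (Metric.closedBall_subset_closedBall hij))
    ⟨r + 1, by linarith, (measure_mono inter_subset_left |>.trans_lt hAf).ne⟩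
  have hI : (⋂ η > r, A ∩ Metric.closedBall x η) ⊆ A ∩ Metric.closedBall x r := by
    intro z hz
    simp only [mem_iInter] at hz
    refine ⟨(hz (r + 1) (by linarith)).1, ?_⟩
    rw [Metric.mem_closedBall]
    apply le_of_forall_gt_imp_ge_of_dense
    intro η hη
    exact (hz η hη).2
  refine le_trans ?_ (measure_mono hI)
  refine ge_of_tendsto lim ?_
  filter_upwards [self_mem_nhdsWithin] with η hη using key η hη

lemma ball_of_M [NeZero n] {A B : Set (V n)} (hA : MeasurableSet A) (hAf : volume A < ⊤)
    (hB : MeasurableSet B) (hBf : volume B < ⊤) (hB0 : volume B ≠ 0)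
    (hcc : CC A B) {a : V n} (ha : IsM B a) :
    A =ᵐ[volume] Metric.ball a (schwarzRadius n A) := by
  have hd := Besicovitch.ae_tendsto_measure_inter_div_of_measurableSet
    (volume : Measure (V n)) hA
  set N : Set (V n) := {x | ¬ Tendsto (fun r => volume (A ∩ Metric.closedBall x r) /
    volume (Metric.closedBall x r)) (𝓝[>] 0) (𝓝 (A.indicator 1 x))} with hN
  have hN0 : volume N = 0 := hd
  have mono : ∀ x y, x ∉ N → y ∉ N → y ∈ A → ‖x - a‖ < ‖y - a‖ → x ∈ A := by
    intro x y hx hy hyA hxy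
    by_contra hxA
    simp only [hN, mem_ofPred_eq, not_not] at hx hy
    rw [indicator_of_mem hyA] at hy
    rw [indicator_of_notMem hxA] at hx
    have : (1 : ℝ≥0∞) ≤ 0 := by
      refine le_of_tendsto_of_tendsto hy hx ?_
      filter_upwards [self_mem_nhdsWithin] with r hr
      have e1 : volume (Metric.closedBall y r) = volume (Metric.closedBall x r) := by
        rw [Measure.addHaar_closedBall_center, Measure.addHaar_closedBall_center volume x]
      rw [e1]
      exact ENNReal.div_le_div_right (vol_le_of_M hA hAf hB hBf hB0 hcc ha hxy r) _
    simp at this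
  set ρ := schwarzRadius n A with hρ
  have hvol : volume (Metric.ball a ρ) = volume A := vol_ball_radius a hAf.ne
  have hsub : A \ N ⊆ Metric.closedBall a ρ := by
    rintro y ⟨hyA, hyN⟩
    rw [Metric.mem_closedBall, dist_eq_norm]
    by_contra! hc
    have h1 : Metric.ball a ‖y - a‖ \ N ⊆ A := by
      rintro x ⟨hx, hxN⟩
      rw [Metric.mem_ball, dist_eq_norm] at hx
      exact mono x y hxN hyN hyA hx
    have h2 := measure_mono (μ := volume) h1
    rw [measure_sdiff_null hN0, ← hvol] at h2
    exact absurd h2 (not_le.2 (vol_ball_lt a a (radius_nonneg A) hc))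
  have hle : A ≤ᵐ[volume] Metric.ball a ρ := by
    have h1 : ∀ᵐ x, x ∉ N := by rw [← measure_eq_zero_iff_ae_notMem]; exact hN0
    have h2 : ∀ᵐ x : V n, x ∉ Metric.sphere a ρ := by
      rw [← measure_eq_zero_iff_ae_notMem]; exact Measure.addHaar_sphere _ _ _
    filter_upwards [h1, h2] with x a1 a2 hx
    have a3 := hsub ⟨hx, a1⟩
    rw [Metric.mem_closedBall] at a3
    rw [Metric.mem_sphere] at a2
    exact lt_of_le_of_ne a3 a2
  exact ae_eq_of_ae_subset_of_measure_ge hle hvol.le hA.nullMeasurableSet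
    measure_ball_lt_top.ne

lemma star_shift_of_balls [NeZero n] {u : V n → ℝ} (hu : Adm u) {a : V n}
    (h : ∀ t : ℝ, 0 < t → ({x | t < u x} : Set (V n)) =ᵐ[volume]
      Metric.ball a (schwarzRadius n {x | t < u x})) :
    ∀ᵐ x, u x = schwarzRearr n u (x - a) := by
  have h1 : ∀ᵐ x, ∀ q : ℚ, 0 < (q : ℝ) → ((q : ℝ) < u x ↔
      x ∈ Metric.ball a (schwarzRadius n {x | (q : ℝ) < u x})) := by
    rw [ae_all_iff]
    intro q
    by_cases hq : 0 < (q : ℝ)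
    · filter_upwards [(h q hq).mem_iff] with x hx _ using hx
    · exact Eventually.of_forall fun x h => absurd h hq
  have h2 : ∀ᵐ x : V n, x ≠ a := by simp [ae_iff]
  filter_upwards [h1, h2] with x hx hxa
  have hq : ∀ q : ℚ, 0 < (q : ℝ) → ((q : ℝ) < u x ↔ (q : ℝ) < schwarzRearr n u (x - a)) := by
    intro q hq
    rw [hx q hq, star_lt hu (sub_ne_zero.2 hxa) hq, Metric.mem_ball, dist_eq_norm,
      lt_radius_iff 0 (hu.fin q hq).ne (norm_nonneg _)]
  have u0 := hu.nonneg x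
  have s0 := star_nonneg u (x - a)
  apply le_antisymm
  · by_contra! hc
    obtain ⟨q, q1, q2⟩ := exists_rat_btwn hc
    exact absurd ((hq q (by linarith)).1 q2) (by linarith)
  · by_contra! hc
    obtain ⟨q, q1, q2⟩ := exists_rat_btwn hc
    exact absurd ((hq q (by linarith)).2 q2) (by linarith)

lemma CC_of_eq [NeZero n] {J : ℝ → ℝ} (hJ : JJ J) {g : V n → ℝ} (hg : Ker g)
    {u v : V n → ℝ} (hu : Adm u) (hv : Adm v) (hfin : En J g u v ≠ ⊤)
    (h : En J g (schwarzRearr n u) (schwarzRearr n v) = En J g u v) (s' t' : ℝ) :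
    CC {x | s' < u x} {x | t' < v x} := by
  intro e s he
  have hle : En J g u v ≤ En J g (pol e s u) (pol e s v) := by
    rw [← h, ← star_pol he s hu, ← star_pol he s hv]
    exact riesz hJ hg (hu.pol he s) (hv.pol he s)
  have hae := En_pol_eq hJ hg he s hu.meas hv.meas hfin hle
  have prodnull : ∀ P Q : Set (V n), (∀ x ∈ P, ∀ y ∈ Q, (ell e s x * ell e s y) *
        ((u x - u (refl e s x)) * (v y - v (refl e s y))) < 0) →
      volume P = 0 ∨ volume Q = 0 := by
    intro P Q hPQ
    rw [← mul_eq_zero, ← Measure.prod_prod]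
    refine measure_mono_null ?_ hae
    rintro ⟨x, y⟩ ⟨hx, hy⟩
    exact not_le.2 (hPQ x hx y hy)
  constructor
  · apply prodnull
    rintro x ⟨x1, x2, x3⟩ y ⟨y1, y2, y3⟩
    simp only [mem_ofPred_eq, not_lt] at x2 x3 y2 y3
    have h1 := mul_neg_of_pos_of_neg x1 y1
    have h2 : 0 < (u x - u (refl e s x)) * (v y - v (refl e s y)) :=
      mul_pos (by linarith) (by linarith)
    exact mul_neg_of_neg_of_pos h1 h2
  · apply prodnull
    rintro x ⟨x1, x2, x3⟩ y ⟨y1, y2, y3⟩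
    simp only [mem_ofPred_eq, not_lt] at x2 x3 y2 y3
    have h1 := mul_neg_of_neg_of_pos x1 y1
    have h2 : 0 < (u x - u (refl e s x)) * (v y - v (refl e s y)) :=
      mul_pos (by linarith) (by linarith)
    exact mul_neg_of_neg_of_pos h1 h2

lemma exists_level {u : V n → ℝ} (hu : Adm u) (h : ¬ ∀ᵐ x, u x = 0) :
    ∃ t : ℝ, 0 < t ∧ volume {x | t < u x} ≠ 0 := by
  by_contra! hc
  apply h
  have h1 : ∀ᵐ x, ∀ k : ℕ, ¬ (1 / ((k : ℝ) + 1) < u x) := by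
    rw [ae_all_iff]
    intro k
    rw [ae_iff]; simp only [not_not]
    exact hc _ (by positivity)
  filter_upwards [h1] with x hx
  apply le_antisymm _ (hu.nonneg x)
  by_contra! hp
  obtain ⟨k, hk⟩ := exists_nat_one_div_lt hp
  exact hx k hk

theorem eq_imp [NeZero n] {J : ℝ → ℝ} (hJ : JJ J) {g : V n → ℝ} (hg : Ker g)
    {u v : V n → ℝ} (hu : Adm u) (hv : Adm v) (hfin : En J g u v ≠ ⊤)
    (h : En J g (schwarzRearr n u) (schwarzRearr n v) = En J g u v)
    (hu0 : ¬ ∀ᵐ x, u x = 0) (hv0 : ¬ ∀ᵐ x, v x = 0) :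
    ∃ a : V n, (∀ᵐ x, u x = schwarzRearr n u (x - a)) ∧
      (∀ᵐ x, v x = schwarzRearr n v (x - a)) := by
  have hcc := CC_of_eq hJ hg hu hv hfin h
  obtain ⟨s, hs, hs0⟩ := exists_level hu hu0
  obtain ⟨t, ht, ht0⟩ := exists_level hv hv0
  have mu : ∀ s, MeasurableSet {x | s < u x} := fun s => measurableSet_lt measurable_const hu.meas
  have mv : ∀ s, MeasurableSet {x | s < v x} := fun s => measurableSet_lt measurable_const hv.meas
  obtain ⟨a, ha⟩ := exists_IsM (hu.fin s hs) hs0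
  obtain ⟨b, hb⟩ := exists_IsM (hv.fin t ht) ht0
  have hab := IsM_eq (mu s) (hu.fin s hs) hs0 (mv t) (hv.fin t ht) ht0 (hcc s t) ha hb
  rw [← hab] at hb
  refine ⟨a, star_shift_of_balls hu fun τ hτ => ?_, star_shift_of_balls hv fun τ hτ => ?_⟩
  · exact ball_of_M (mu τ) (hu.fin τ hτ) (mv t) (hv.fin t ht) ht0 (hcc τ t) hb
  · exact ball_of_M (mv τ) (hv.fin τ hτ) (mu s) (hu.fin s hs) hs0 (hcc s τ).symm ha

end RR

open MeasureTheory Real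
namespace RR
open Filter Topology Set
open scoped ENNReal
variable {n : ℕ}

lemma layer [NeZero n] {Φ : ℝ → ℝ} (hc : Continuous Φ) (h0 : Φ 0 = 0) (hp : ∀ t, 0 ≤ Φ t)
    (hm : ∀ a b, 0 ≤ a → a ≤ b → Φ a ≤ Φ b) {v : V n → ℝ} (hv : Adm v) :
    ∫⁻ x, ENNReal.ofReal (Φ (schwarzRearr n v x)) = ∫⁻ x, ENNReal.ofReal (Φ (v x)) := by
  rw [lintegral_eq_lintegral_meas_lt _ (Eventually.of_forall fun x => hp _)
      (hc.measurable.comp (star_meas hv)).aemeasurable,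
    lintegral_eq_lintegral_meas_lt _ (Eventually.of_forall fun x => hp _)
      (hc.measurable.comp hv.meas).aemeasurable]
  apply setLIntegral_congr_fun measurableSet_Ioi
  intro t ht
  have ht : 0 < t := ht
  set S : Set ℝ := {r | 0 ≤ r ∧ t < Φ r} with hS
  have hsub : ∀ w : V n → ℝ, (∀ x, 0 ≤ w x) → {x | t < Φ (w x)} = {x | w x ∈ S} := by
    intro w hw
    ext x
    simp [hS, hw x]
  beta_reduce
  rw [hsub _ (star_nonneg v), hsub _ hv.nonneg]
  rcases S.eq_empty_or_nonempty with he | hne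
  · rw [he]; simp
  · have hb : BddBelow S := ⟨0, fun r hr => hr.1⟩
    set c := sInf S with hcS
    have hc0 : 0 ≤ c := le_csInf hne fun r hr => hr.1
    have hΦc : Φ c ≤ t := by
      by_contra! hlt
      have hcpos : 0 < c := by
        rcases hc0.lt_or_eq with h | h
        · exact h
        · rw [← h, h0] at hlt; linarith
      have hev := (hc.tendsto c).eventually_const_lt hlt
      obtain ⟨δ, hδ, hd⟩ := Metric.eventually_nhds_iff.1 hev
      set r := max 0 (c - δ / 2) with hr
      have hrc : r < c := max_lt hcpos (by linarith)
      have : r ∈ S := by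
        refine ⟨le_max_left _ _, hd ?_⟩
        rw [Real.dist_eq, abs_sub_comm, abs_of_pos (by linarith)]
        have := le_max_right 0 (c - δ / 2)
        linarith
      exact absurd (csInf_le hb this) (not_le.2 hrc)
    have hcpos : 0 < c := by
      -- continuity at the origin
      have hev := (hc.tendsto 0).eventually_lt_const (show Φ 0 < t by rw [h0]; exact ht)
      obtain ⟨δ, hδ, hd⟩ := Metric.eventually_nhds_iff.1 hev
      refine lt_of_lt_of_le hδ (le_csInf hne fun r hr => ?_)
      by_contra! hlt
      have := hd (y := r) (by rw [Real.dist_eq, sub_zero, abs_of_nonneg hr.1]; exact hlt)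
      linarith [hr.2]
    have hiff : ∀ r, r ∈ S ↔ c < r := by
      intro r
      constructor
      · intro hr
        refine lt_of_le_of_ne (csInf_le hb hr) fun h => ?_
        have := hr.2
        rw [← h] at this; linarith
      · intro hr
        obtain ⟨r', hr', hlt⟩ := exists_lt_of_csInf_lt hne hr
        exact ⟨by linarith, hr'.2.trans_le (hm r' r hr'.1 hlt.le)⟩
    simp only [hiff]
    exact star_vol hv hcpos

lemma star_zero [NeZero n] {u : V n → ℝ} (hu : Adm u) (h : ∀ᵐ x, u x = 0) :
    schwarzRearr n u =ᵐ[volume] fun _ => 0 := by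
  filter_upwards [ae_ne_zero] with x hx
  apply le_antisymm _ (star_nonneg u x)
  by_contra! hc
  obtain ⟨t, t1, t2⟩ := exists_between hc
  rw [star_lt hu hx t1] at t2
  have : volume {y | t < u y} = 0 := by
    rw [measure_eq_zero_iff_ae_notMem]
    filter_upwards [h] with y hy hc
    have hc : t < u y := hc
    linarith
  rw [this] at t2
  simp at t2

lemma En_left {J : ℝ → ℝ} (hJ : JJ J) {g : V n → ℝ} (hg : Ker g) {v : V n → ℝ} (hv : Measurable v) :
    En J g (fun _ => 0) v = (∫⁻ x, ENNReal.ofReal (g x)) * ∫⁻ y, ENNReal.ofReal (J (-v y)) := by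
  have hgm := hg.meas
  have hJm := hJ.cont.measurable
  unfold En
  rw [lintegral_lintegral_swap (by fun_prop), ← lintegral_const_mul _ (by fun_prop)]
  apply lintegral_congr
  intro y
  simp only [ENNReal.ofReal_mul (hJ.nonneg _), zero_sub]
  rw [lintegral_const_mul _ (by fun_prop),
    lintegral_sub_right_eq_self (fun z => ENNReal.ofReal (g z)) y, mul_comm]

lemma En_right {J : ℝ → ℝ} (hJ : JJ J) {g : V n → ℝ} (hg : Ker g) {u : V n → ℝ} (hu : Measurable u) :
    En J g u (fun _ => 0) = (∫⁻ x, ENNReal.ofReal (g x)) * ∫⁻ y, ENNReal.ofReal (J (u y)) := by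
  have hgm := hg.meas
  have hJm := hJ.cont.measurable
  unfold En
  rw [← lintegral_const_mul _ (by fun_prop)]
  apply lintegral_congr
  intro y
  simp only [ENNReal.ofReal_mul (hJ.nonneg _), sub_zero]
  rw [lintegral_const_mul _ (by fun_prop),
    lintegral_sub_left_eq_self (fun z => ENNReal.ofReal (g z)) y, mul_comm]

theorem imp_eq_left [NeZero n] {J : ℝ → ℝ} (hJ : JJ J) {g : V n → ℝ} (hg : Ker g)
    {u v : V n → ℝ} (hu : Adm u) (hv : Adm v) (h : ∀ᵐ x, u x = 0) :
    En J g (schwarzRearr n u) (schwarzRearr n v) = En J g u v := by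
  rw [En_congr (star_zero hu h) (ae_eq_refl _),
    En_congr (show u =ᵐ[volume] fun _ => 0 from h) (ae_eq_refl _),
    En_left hJ hg (star_meas hv), En_left hJ hg hv.meas]
  congr 1
  have hc := hJ.cont
  exact layer (Φ := fun t => J (-t)) (by fun_prop) (by simp [hJ.zero]) (fun t => hJ.nonneg _)
    (fun a b ha hab => J_between hJ (Or.inr ⟨by linarith, by linarith⟩)) hv

theorem imp_eq_right [NeZero n] {J : ℝ → ℝ} (hJ : JJ J) {g : V n → ℝ} (hg : Ker g)
    {u v : V n → ℝ} (hu : Adm u) (hv : Adm v) (h : ∀ᵐ x, v x = 0) :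
    En J g (schwarzRearr n u) (schwarzRearr n v) = En J g u v := by
  rw [En_congr (ae_eq_refl _) (star_zero hv h),
    En_congr (ae_eq_refl _) (show v =ᵐ[volume] fun _ => 0 from h),
    En_right hJ hg (star_meas hu), En_right hJ hg hu.meas]
  congr 1
  exact layer hJ.cont hJ.zero hJ.nonneg
    (fun a b ha hab => J_between hJ (Or.inl ⟨by linarith, by linarith⟩)) hu

theorem imp_eq_shift {J : ℝ → ℝ} {g : V n → ℝ} {u v : V n → ℝ} {a : V n}
    (h : ∀ᵐ x, u x = schwarzRearr n u (x - a)) (h' : ∀ᵐ x, v x = schwarzRearr n v (x - a)) :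
    En J g (schwarzRearr n u) (schwarzRearr n v) = En J g u v := by
  rw [En_congr (u := u) (v := v) h h']
  unfold En
  rw [← lintegral_sub_right_eq_self _ a]
  apply lintegral_congr
  intro x
  rw [← lintegral_sub_right_eq_self _ a]
  apply lintegral_congr
  intro y
  rw [sub_sub_sub_cancel_right]

lemma mk_Ker {g : V n → ℝ} (hgint : Integrable g) (hgnonneg : ∀ x, 0 ≤ g x)
    (g₀ : ℝ → ℝ) (hg₀ : StrictAntiOn g₀ (Set.Ioi 0)) (hgrad : ∀ x, g x = g₀ ‖x‖) : Ker g := by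
  refine ⟨hgnonneg, ?_, fun x y h => by rw [hgrad, hgrad, h], fun x y hx hxy => ?_, hgint⟩
  · have hmono : Measurable (fun r : Ioi (0 : ℝ) => g₀ r) := by
      apply Antitone.measurable
      intro a b hab
      exact hg₀.antitoneOn a.2 b.2 hab
    apply measurable_of_measurable_on_compl_singleton 0
    have h1 : Measurable fun x : {x : V n | x ≠ 0} => (⟨‖x.1‖, norm_pos_iff.2 x.2⟩ : Ioi (0 : ℝ)) :=
      Measurable.subtype_mk (by fun_prop)
    have h2 := hmono.comp h1
    convert h2 using 1
    funext x
    exact hgrad _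
  · rw [hgrad, hgrad]
    have : 0 < ‖x‖ := norm_pos_iff.2 hx
    exact hg₀ this (this.trans hxy) hxy

end RR

theorem stmt_1 (n : ℕ) (hn : 1 ≤ n)
    (J : ℝ → ℝ) (hJnonneg : ∀ t, 0 ≤ J t) (hJconv : StrictConvexOn ℝ Set.univ J) (hJ0 : J 0 = 0)
    (g : EuclideanSpace ℝ (Fin n) → ℝ) (hgint : Integrable g) (hgnonneg : ∀ x, 0 ≤ g x)
    (g₀ : ℝ → ℝ) (hg₀ : StrictAntiOn g₀ (Set.Ioi 0)) (hgrad : ∀ x, g x = g₀ ‖x‖)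
    (u v : EuclideanSpace ℝ (Fin n) → ℝ) (hu : Measurable u) (hv : Measurable v)
    (hu0 : ∀ x, 0 ≤ u x) (hv0 : ∀ x, 0 ≤ v x)
    (huτ : ∀ τ : ℝ, 0 < τ → volume {x | τ < u x} < ⊤)
    (hvτ : ∀ τ : ℝ, 0 < τ → volume {x | τ < v x} < ⊤)
    (hfin : (∫⁻ x : EuclideanSpace ℝ (Fin n), ∫⁻ y : EuclideanSpace ℝ (Fin n),
        ENNReal.ofReal (J (u x - v y) * g (x - y))) ≠ ⊤) :
    ((∫⁻ x : EuclideanSpace ℝ (Fin n), ∫⁻ y : EuclideanSpace ℝ (Fin n),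
        ENNReal.ofReal (J (schwarzRearr n u x - schwarzRearr n v y) * g (x - y))) =
      ∫⁻ x : EuclideanSpace ℝ (Fin n), ∫⁻ y : EuclideanSpace ℝ (Fin n),
        ENNReal.ofReal (J (u x - v y) * g (x - y))) ↔
      ((∀ᵐ x ∂(volume : Measure (EuclideanSpace ℝ (Fin n))), u x = 0) ∨
        (∀ᵐ y ∂(volume : Measure (EuclideanSpace ℝ (Fin n))), v y = 0) ∨
        ∃ a : EuclideanSpace ℝ (Fin n),
          (∀ᵐ x ∂(volume : Measure (EuclideanSpace ℝ (Fin n))),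
            u x = schwarzRearr n u (x - a)) ∧
          (∀ᵐ y ∂(volume : Measure (EuclideanSpace ℝ (Fin n))),
            v y = schwarzRearr n v (y - a))) := by
  have : NeZero n := ⟨by omega⟩
  have hJ : RR.JJ J := ⟨hJnonneg, hJconv, hJ0⟩
  have hg : RR.Ker g := RR.mk_Ker hgint hgnonneg g₀ hg₀ hgrad
  have hU : RR.Adm u := ⟨hu, hu0, huτ⟩
  have hV : RR.Adm v := ⟨hv, hv0, hvτ⟩
  constructor
  · intro h
    by_cases c1 : ∀ᵐ x ∂(volume : Measure (EuclideanSpace ℝ (Fin n))), u x = 0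
    · exact Or.inl c1
    by_cases c2 : ∀ᵐ x ∂(volume : Measure (EuclideanSpace ℝ (Fin n))), v x = 0
    · exact Or.inr (Or.inl c2)
    exact Or.inr (Or.inr (RR.eq_imp hJ hg hU hV hfin h c1 c2))
  · rintro (h | h | ⟨a, h, h'⟩)
    · exact RR.imp_eq_left hJ hg hU hV h
    · exact RR.imp_eq_right hJ hg hU hV h
    · exact RR.imp_eq_shift h h'
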